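/- For every integer k ≥ 1, every k-nice subset of ℤ² has at most k + 6 elements. -/

import Mathlib

/-- A set `Q ⊆ ℤ²` is `k`-nice if every element is a nonzero coprime pair,
`Q` does not contain both a pair and its negation, and all cross determinants
are bounded by `k` in absolute value. -/
def IsKNice (k : ℕ) (Q : Set (ℤ × ℤ)) : Prop :=
  (∀ p ∈ Q, p ≠ (0, 0) ∧ Int.gcd p.1 p.2 = 1) ∧
  (∀ p ∈ Q, -p ∉ Q) ∧
  (∀ p ∈ Q, ∀ q ∈ Q, |p.1 * q.2 - q.1 * p.2| ≤ (k : ℤ))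

/-- `Q` is y-non-negative: all second coordinates are non-negative. -/
def YNonneg (Q : Set (ℤ × ℤ)) : Prop := ∀ p ∈ Q, 0 ≤ p.2

/-- The height of `Q` is at most `h`. -/
def HeightLe (Q : Set (ℤ × ℤ)) (h : ℕ) : Prop := ∀ p ∈ Q, |p.2| ≤ (h : ℤ)

/-- The height of `Q` is exactly `h`: the maximum of `|n|` over `(m, n) ∈ Q` is `h`. -/
def HeightEq (Q : Set (ℤ × ℤ)) (h : ℕ) : Prop :=
  HeightLe Q h ∧ ∃ p ∈ Q, |p.2| = (h : ℤ)

/-!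
A prime `p > k` embeds `Q` into the projective line over `ZMod p`, so `Q` has at most `p + 1`
elements, and we may assume that there is no prime in `(k, k + 5]`. Among the `k`-nice sets of the
same size choose one of least height `h`, in the upper half plane. By minimality every primitive
linear form takes a value of size at least `h` on it; the determinants of three elements on which
the forms `y`, `x` and `x - y` are large give `3 h ^ 2 ≤ 4 k`.

The row at height `n` consists of integers coprime to `n` in an interval `[-g n, f n]`, and cutting
the segments from the origin to the elements of `Q` at the heights `n` and `m` shows that
`f n * m + g m * n ≤ k`. It remains to bound the sum of the coprime counts of these intervals over
`1 ≤ n ≤ h`.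

For `h ≤ 180` this is a finite computation: the variables `f n` and `g m` are eliminated one at a
time, with linear majorants of the coprime counts if `k` is large and with the exact counts for the
remaining `k`. For `h ≥ 181` only coprimality to `gcd n 210` is used. The widths `W n = f n + g n`
satisfy `W n * m + W m * n ≤ 2 k`, which on the quarter circle of radius `h` becomes
`∑ W n ≤ π k / 2`, and `π / 2` times the mean `27648 / 210 ^ 2` of `φ(gcd n 210) / gcd n 210` is
less than `1`.
-/

namespace IsKNice

/-! ### Counting integers coprime to `n` -/

/-- `f n`. The kernel brings the major premise `n` of the recursor to a numeral before it is
substituted into `f`, which gives call-by-value evaluation. -/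
def forceEval {α : Type*} (n : ℕ) (f : ℕ → α) : α := Nat.rec (f 0) (fun m _ => f m.succ) n

@[simp] lemma forceEval_eq {α : Type*} (n : ℕ) (f : ℕ → α) : forceEval n f = f n := by
  cases n <;> rfl

/-- The maximum of `d i` over `i < n`. -/
def maxBelow (d : ℕ → ℕ) (n : ℕ) : ℕ :=
  Nat.rec 0 (fun i m => forceEval m fun m => Nat.add m (Nat.sub (d i) m)) n

lemma maxBelow_succ (d : ℕ → ℕ) (n : ℕ) : maxBelow d (n + 1) = max (maxBelow d n) (d n) :=
  (forceEval_eq _ fun m => m + (d n - m)).trans add_tsub_eq_max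

lemma monotone_maxBelow (d : ℕ → ℕ) : Monotone (maxBelow d) :=
  monotone_nat_of_le_succ fun n => by rw [maxBelow_succ]; exact le_max_left _ _

lemma le_maxBelow (d : ℕ → ℕ) {i n : ℕ} (hi : i < n) : d i ≤ maxBelow d n := by
  refine le_trans ?_ (monotone_maxBelow d (Nat.succ_le_of_lt hi))
  rw [Nat.succ_eq_add_one, maxBelow_succ]
  exact le_max_right _ _

lemma maxBelow_lt {d : ℕ → ℕ} {b : ℕ} (hd : ∀ i, d i < b) (n : ℕ) : maxBelow d n < b := by
  induction n with
  | zero => exact (Nat.zero_le _).trans_lt (hd 0)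
  | succ n ih => rw [maxBelow_succ]; exact max_lt ih (hd n)

/-- The number of `0 < j ≤ r` coprime to `n`. The explicit recursor lets the kernel evaluate it and
reuse earlier values. -/
def coprimeCount (n r : ℕ) : ℕ :=
  Nat.rec 0 (fun j c => c + if n.Coprime (j + 1) then 1 else 0) r

@[simp] lemma coprimeCount_zero (n : ℕ) : coprimeCount n 0 = 0 := rfl

lemma coprimeCount_succ (n r : ℕ) :
    coprimeCount n (r + 1) = coprimeCount n r + if n.Coprime (r + 1) then 1 else 0 := rfl

lemma coprimeCount_eq_card (n r : ℕ) :
    coprimeCount n r = ((Finset.Ioc 0 r).filter n.Coprime).card := by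
  induction r with
  | zero => rfl
  | succ r ih =>
    rw [coprimeCount_succ, ih, ← Finset.insert_Ioc_right_eq_Ioc_add_one (Nat.zero_le r),
      Finset.filter_insert]
    split_ifs
    · rw [Finset.card_insert_of_notMem (by simp)]
    · rfl

lemma coprimeCount_self (n : ℕ) : coprimeCount n n = n.totient := by
  rw [coprimeCount_eq_card, ← Nat.filter_coprime_Ico_eq_totient n 1]
  congr 2
  ext j
  simp only [Finset.mem_Ioc, Finset.mem_Ico]
  omega

/-- The signed number of integers in `(0, x]` coprime to `n`; for `x < 0` it is minus the number of
those in `(x, 0]`. -/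
def signedCoprimeCount (n : ℕ) (x : ℤ) : ℤ :=
  n.totient * (x / n) + coprimeCount n (x % n).toNat

lemma signedCoprimeCount_add_mul {n : ℕ} (hn : 0 < n) (x q : ℤ) :
    signedCoprimeCount n (x + n * q) = signedCoprimeCount n x + n.totient * q := by
  have hn' : (n : ℤ) ≠ 0 := by positivity
  rw [signedCoprimeCount, signedCoprimeCount, Int.add_mul_ediv_left _ _ hn',
    Int.add_mul_emod_self_left]
  ring

lemma signedCoprimeCount_natCast {n r : ℕ} (hr : r < n) :
    signedCoprimeCount n r = coprimeCount n r := by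
  have hr' : (r : ℤ) < n := by exact_mod_cast hr
  simp [signedCoprimeCount, Int.ediv_eq_zero_of_lt (Int.natCast_nonneg r) hr',
    Int.emod_eq_of_lt (Int.natCast_nonneg r) hr']

lemma exists_eq_natCast_add_mul {n : ℕ} (hn : 0 < n) (x : ℤ) :
    ∃ (r : ℕ) (q : ℤ), r < n ∧ x = r + n * q := by
  have hn' : (0 : ℤ) < n := by exact_mod_cast hn
  lift x % n to ℕ using Int.emod_nonneg x hn'.ne' with r hr
  refine ⟨r, x / n, ?_, ?_⟩
  · have := Int.emod_lt_of_pos x hn'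
    omega
  · rw [hr, Int.emod_add_mul_ediv]

lemma signedCoprimeCount_eq_sub_one_add {n : ℕ} (hn : 0 < n) (x : ℤ) :
    signedCoprimeCount n x = signedCoprimeCount n (x - 1) + if Int.gcd x n = 1 then 1 else 0 := by
  obtain ⟨r, q, hr, rfl⟩ := exists_eq_natCast_add_mul hn x
  have hgcd : Int.gcd ((r : ℤ) + n * q) n = Nat.gcd n r := by
    rw [Int.gcd_add_mul_left_left, Int.gcd_natCast_natCast, Nat.gcd_comm]
  rw [hgcd, signedCoprimeCount_add_mul hn, signedCoprimeCount_natCast hr]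
  rcases r with _ | r
  · obtain ⟨m, rfl⟩ : ∃ m, n = m + 1 := ⟨n - 1, by omega⟩
    have hshift : ((0 : ℕ) : ℤ) + (m + 1 : ℕ) * q - 1 = (m : ℕ) + (m + 1 : ℕ) * (q - 1) := by
      push_cast; ring
    have htotient := coprimeCount_self (m + 1)
    rw [coprimeCount_succ] at htotient
    rw [hshift, signedCoprimeCount_add_mul hn, signedCoprimeCount_natCast m.lt_succ_self,
      ← htotient]
    simp only [Nat.Coprime, Nat.gcd_self, Nat.gcd_zero_right, coprimeCount_zero]
    push_cast
    ring
  · have hshift : ((r + 1 : ℕ) : ℤ) + n * q - 1 = r + n * q := by push_cast; ring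
    rw [hshift, signedCoprimeCount_add_mul hn, signedCoprimeCount_natCast (Nat.lt_of_succ_lt hr),
      coprimeCount_succ]
    simp only [Nat.Coprime]
    push_cast
    ring

lemma card_filter_coprime_Ioc {n : ℕ} (hn : 0 < n) {x y : ℤ} (hxy : x ≤ y) :
    (((Finset.Ioc x y).filter fun m => Int.gcd m n = 1).card : ℤ) =
      signedCoprimeCount n y - signedCoprimeCount n x := by
  induction y, hxy using Int.leInduction with
  | base => simp
  | succ y hy ih =>
    rw [← Finset.insert_Ioc_right_eq_Ioc_add_one hy, Finset.filter_insert,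
      signedCoprimeCount_eq_sub_one_add hn (y + 1), add_sub_cancel_right]
    split_ifs
    · rw [Finset.card_insert_of_notMem (by simp), Nat.cast_succ, ih]
      ring
    · rw [ih, add_zero]

lemma monotone_signedCoprimeCount {n : ℕ} (hn : 0 < n) : Monotone (signedCoprimeCount n) := by
  intro x y hxy
  have := card_filter_coprime_Ioc hn hxy
  omega

lemma signedCoprimeCount_neg_sub_one {n : ℕ} (hn : 0 < n) (x : ℤ) :
    signedCoprimeCount n (-x - 1) = -signedCoprimeCount n x - if n = 1 then 1 else 0 := by
  have hstep (y : ℤ) : signedCoprimeCount n (-y - 1) + signedCoprimeCount n y =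
      signedCoprimeCount n (-(y - 1) - 1) + signedCoprimeCount n (y - 1) := by
    have hy := signedCoprimeCount_eq_sub_one_add hn y
    have hneg := signedCoprimeCount_eq_sub_one_add hn (-y)
    rw [Int.neg_gcd] at hneg
    rw [show -(y - 1) - 1 = -y by ring]
    omega
  suffices h : signedCoprimeCount n (-x - 1) + signedCoprimeCount n x = -if n = 1 then 1 else 0 by
    omega
  induction x using Int.induction_on with
  | zero =>
    have h0 : signedCoprimeCount n 0 = 0 := by simp [signedCoprimeCount]
    have := signedCoprimeCount_eq_sub_one_add hn 0
    rw [Int.gcd_zero_left, Int.natAbs_natCast] at this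
    rw [neg_zero]
    omega
  | succ i ih => rw [hstep]; simpa using ih
  | pred i ih => rwa [hstep] at ih

lemma card_filter_coprime_Icc {n : ℕ} (hn : 0 < n) {a b : ℤ} (hab : -1 ≤ a + b) :
    (((Finset.Icc (-b) a).filter fun m => Int.gcd m n = 1).card : ℤ) =
      signedCoprimeCount n a + signedCoprimeCount n b + if n = 1 then 1 else 0 := by
  have hIcc : Finset.Icc (-b) a = Finset.Ioc (-b - 1) a := by
    ext z
    simp only [Finset.mem_Ioc, Finset.mem_Icc]
    omega
  rw [hIcc, card_filter_coprime_Ioc hn (by omega), signedCoprimeCount_neg_sub_one hn]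
  ring

/-- `discrepancy n / n` bounds the excess of `signedCoprimeCount n x` over its linear approximation
`φ(n) x / n`. -/
def discrepancy (n : ℕ) : ℕ :=
  maxBelow (fun r => n * coprimeCount n r - n.totient * r) n

lemma mul_signedCoprimeCount_le {n : ℕ} (hn : 0 < n) (x : ℤ) :
    n * signedCoprimeCount n x ≤ n.totient * x + discrepancy n := by
  obtain ⟨r, q, hr, rfl⟩ := exists_eq_natCast_add_mul hn x
  have hle : n * coprimeCount n r - n.totient * r ≤ discrepancy n :=
    le_maxBelow (fun r => n * coprimeCount n r - n.totient * r) hr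
  have hle' : (n * coprimeCount n r : ℤ) ≤ n.totient * r + discrepancy n := by
    exact_mod_cast Nat.sub_le_iff_le_add'.mp hle
  rw [signedCoprimeCount_add_mul hn, signedCoprimeCount_natCast hr]
  linarith

/-! ### Elimination of coupled variables -/

/-- The inequalities between the right ends `f n` and the left ends `g m` of the rows at heights
`n, m ≤ h`. -/
def IsCoupled (k h : ℕ) (f g : ℕ → ℤ) : Prop :=
  ∀ n ∈ Finset.Icc 1 h, ∀ m ∈ Finset.Icc 1 h, f n * m + g m * n ≤ k

/-- The sum of the coprime counts at `f n` and `g n` over `1 ≤ n ≤ h`. -/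
def totalCount (h : ℕ) (f g : ℕ → ℤ) : ℤ :=
  ∑ n ∈ Finset.Icc 1 h, (signedCoprimeCount n (f n) + signedCoprimeCount n (g n))

/-- `v` bounds the total coprime count of all coupled functions. -/
def TotalCountLE (k h : ℕ) (v : ℤ) : Prop :=
  ∀ f g, IsCoupled k h f g → totalCount h f g ≤ v

lemma TotalCountLE.mono {k k' h : ℕ} {v v' : ℤ} (H : TotalCountLE k h v) (hk : k' ≤ k)
    (hv : v ≤ v') : TotalCountLE k' h v' := fun f g hfg =>
  (H f g fun n hn m hm => (hfg n hn m hm).trans (by exact_mod_cast hk)).trans hv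

/-- A data type `σ` of computable functions of one integer variable `x`, each of the form periodic
plus linear in `x` and tied to one index `n ≤ h`, together with the operations that eliminate the
variables of the coupling inequalities `f n * m + g m * n ≤ k` one at a time: `combine A B` bounds
`A x + B y` in terms of `x` only, and `hull A` is a monotone majorant of `A`. The continuation
passing `force` evaluates a datum before it is used. -/
structure EliminationScheme (σ : Type) where
  slope : σ → ℕ
  hull : σ → σ
  combine : σ → σ → σ
  force {α : Type} : σ → (σ → α) → α

namespace EliminationScheme

variable {σ : Type} (S : EliminationScheme σ)

/-- Eliminates all the variables of the rows `P` and `R`, starting from a bound `s` in terms of a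
variable on the side of `P`. The next row `t` of `R` is absorbed into `s` if this leaves the slope
nonnegative; otherwise its variable replaces that of `s` and the sides are swapped. -/
def run : ℕ → σ → List σ → List σ → Option σ
  | fuel + 1, s, P, t :: R =>
    if S.slope t ≤ S.slope s then S.force (S.combine s t) fun s => run fuel s P R
    else S.force (S.hull s) fun s => S.force (S.combine t s) fun s => run fuel s R P
  | _, s, [], [] => some s
  | _, _, _, _ => none

/-- Eliminates two copies of the same rows, the second one in reverse order. -/
def eliminate : List σ → Option σ
  | [] => none
  | s :: P => S.run (2 * P.length + 1) s P (s :: P).reverse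

/-- `K (L.map f)`, with the list evaluated first. -/
def forceMap {α : Type} (f : ℕ → σ) : List ℕ → (List σ → α) → α
  | [], K => K []
  | n :: L, K => forceEval n fun n => S.force (f n) fun s => forceMap f L fun l => K (s :: l)

/-- A semantics for an elimination scheme: the datum `s` belongs to the index `period s` and
represents the function `value s`. -/
structure Model (k : ℕ) where
  period : σ → ℕ
  value : σ → ℤ → ℚ
  Valid : σ → Prop
  force_eq {α : Type} (s : σ) (f : σ → α) : S.force s f = f s
  slope_hull (s : σ) : S.slope (S.hull s) = S.slope s
  period_hull (s : σ) : period (S.hull s) = period s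
  valid_hull {s : σ} : Valid s → Valid (S.hull s)
  monotone_hull {s : σ} : Valid s → Monotone (value (S.hull s))
  le_hull {s : σ} : Valid s → ∀ x, value s x ≤ value (S.hull s) x
  period_combine (s t : σ) : period (S.combine s t) = period s
  valid_combine {s t : σ} : Valid s → Valid t → Valid (S.combine s t)
  add_le_combine {s t : σ} : Valid s → Valid t → Monotone (value t) → S.slope t ≤ S.slope s →
    ∀ x y : ℤ, x * period t + y * period s ≤ k → value s x + value t y ≤ value (S.combine s t) x

namespace Model

variable {S} {k : ℕ} (M : S.Model k)

include M in
lemma forceMap_eq {α : Type} (f : ℕ → σ) (L : List ℕ) (K : List σ → α) :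
    S.forceMap f L K = K (L.map f) := by
  induction L generalizing K with
  | nil => rfl
  | cons n L ih => simp only [forceMap, forceEval_eq, M.force_eq, ih, List.map_cons]

/-- The datum `t` is a monotone majorant of the coprime count of its index. -/
structure IsRow (t : σ) : Prop where
  valid : M.Valid t
  monotone : Monotone (M.value t)
  le_value (x : ℤ) : (signedCoprimeCount (M.period t) x : ℚ) ≤ M.value t x

/-- The total coprime count of the rows `P` at the values of `f`. -/
def rowSum (P : List σ) (f : ℕ → ℤ) : ℚ :=
  (P.map fun t => (signedCoprimeCount (M.period t) (f (M.period t)) : ℚ)).sum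

/-- The coupling inequalities between the rows `P` at the values of `f` and the rows `R` at the
values of `g`. -/
def Coupled (P R : List σ) (f g : ℕ → ℤ) : Prop :=
  ∀ p ∈ P, ∀ r ∈ R, f (M.period p) * M.period r + g (M.period r) * M.period p ≤ k

variable {M}

lemma Coupled.symm {P R : List σ} {f g : ℕ → ℤ} (h : M.Coupled P R f g) : M.Coupled R P g f :=
  fun r hr p hp => by simpa only [add_comm] using h p hp r hr

lemma Coupled.combine {s t : σ} {P R : List σ} {f g : ℕ → ℤ}
    (h : M.Coupled (s :: P) (t :: R) f g) (t' : σ) :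
    M.Coupled (S.combine s t' :: P) R f g := by
  intro p hp r hr
  rcases List.mem_cons.mp hp with rfl | hp
  · simpa only [M.period_combine] using
      h s List.mem_cons_self r (List.mem_cons_of_mem t hr)
  · exact h p (List.mem_cons_of_mem s hp) r (List.mem_cons_of_mem t hr)

variable (M)

lemma value_add_rowSum_le {fuel : ℕ} {s s' : σ} {P R : List σ}
    (hrun : S.run fuel s P R = some s') {v : ℚ} (hv : ∀ x, M.value s' x ≤ v)
    (hs : M.Valid s) (hP : ∀ t ∈ P, M.IsRow t) (hR : ∀ t ∈ R, M.IsRow t) {f g : ℕ → ℤ}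
    (hfg : M.Coupled (s :: P) R f g) :
    M.value s (f (M.period s)) + M.rowSum P f + M.rowSum R g ≤ v := by
  fun_induction run generalizing f g with
  | case1 fuel s P t R hslope ih =>
    rw [M.force_eq] at hrun
    obtain ⟨ht, hR⟩ := List.forall_mem_cons.mp hR
    have hrest := ih _ hrun (M.valid_combine hs ht.valid) hP hR (hfg.combine t)
    have hcombine := M.add_le_combine hs ht.valid ht.monotone hslope (f (M.period s))
      (g (M.period t)) (hfg s List.mem_cons_self t List.mem_cons_self)
    have htg := ht.le_value (g (M.period t))
    rw [M.period_combine] at hrest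
    simp only [rowSum, List.map_cons, List.sum_cons] at hrest ⊢
    linarith
  | case2 fuel s P t R hslope ih =>
    rw [M.force_eq, M.force_eq] at hrun
    obtain ⟨ht, hR⟩ := List.forall_mem_cons.mp hR
    have hrest := ih _ hrun (M.valid_combine ht.valid (M.valid_hull hs)) hR hP
      (hfg.symm.combine (S.hull s))
    have hcombine := M.add_le_combine ht.valid (M.valid_hull hs) (M.monotone_hull hs)
      (by rw [M.slope_hull]; omega) (g (M.period t)) (f (M.period s))
      (by simpa only [M.period_hull] using
        hfg.symm t List.mem_cons_self s List.mem_cons_self)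
    have hsf := M.le_hull hs (f (M.period s))
    have htg := ht.le_value (g (M.period t))
    rw [M.period_combine] at hrest
    simp only [rowSum, List.map_cons, List.sum_cons] at hrest ⊢
    linarith
  | case3 _ s =>
    obtain rfl := Option.some.inj hrun
    simpa [rowSum] using hv (f (M.period s))
  | case4 => cases hrun

lemma rowSum_add_rowSum_le {L : List σ} {s : σ} (helim : S.eliminate L = some s) {v : ℚ}
    (hv : ∀ x, M.value s x ≤ v) (hL : ∀ t ∈ L, M.IsRow t) {f g : ℕ → ℤ}
    (hfg : M.Coupled L L f g) :
    M.rowSum L f + M.rowSum L g ≤ v := by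
  rcases L with _ | ⟨s₀, P⟩
  · cases helim
  have hs₀ := hL s₀ List.mem_cons_self
  have hbound := M.value_add_rowSum_le helim hv hs₀.valid
    (fun t ht => hL t (List.mem_cons_of_mem s₀ ht)) (fun t ht => hL t (List.mem_reverse.mp ht))
    fun p hp r hr => hfg p hp r (List.mem_reverse.mp hr)
  have hrev : M.rowSum (s₀ :: P).reverse g = M.rowSum (s₀ :: P) g := by
    rw [rowSum, List.map_reverse, List.sum_reverse, rowSum]
  have := hs₀.le_value (f (M.period s₀))
  rw [hrev] at hbound
  rw [rowSum, List.map_cons, List.sum_cons, ← rowSum]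
  linarith

lemma rowSum_map {start : ℕ → σ} (hperiod : ∀ n, M.period (start n) = n) (L : List ℕ)
    (f : ℕ → ℤ) :
    M.rowSum (L.map start) f = (L.map fun n => (signedCoprimeCount n (f n) : ℚ)).sum := by
  simp only [rowSum, List.map_map, Function.comp_def, hperiod]

lemma sum_Icc_eq_sum_map {L : List ℕ} {h : ℕ} (hL : L.Perm (List.range' 1 h)) (F : ℕ → ℚ) :
    ∑ n ∈ Finset.Icc 1 h, F n = (L.map F).sum := by
  rw [(hL.map F).sum_eq]
  rfl

lemma totalCountLE {start : ℕ → σ} (hperiod : ∀ n, M.period (start n) = n)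
    (hstart : ∀ n, 0 < n → M.IsRow (start n)) {L : List ℕ} {h : ℕ}
    (hL : L.Perm (List.range' 1 h)) {s : σ} (helim : S.eliminate (L.map start) = some s) {v : ℚ}
    (hv : ∀ x, M.value s x ≤ v) : TotalCountLE k h ⌊v⌋ := by
  intro f g hfg
  rw [Int.le_floor]
  have hmem (n : ℕ) (hn : n ∈ L) : n ∈ Finset.Icc 1 h := by
    rw [hL.mem_iff, List.mem_range'_1] at hn
    exact Finset.mem_Icc.mpr (by omega)
  have hbound := M.rowSum_add_rowSum_le helim hv
    (List.forall_mem_map.mpr fun n hn => hstart n (Finset.mem_Icc.mp (hmem n hn)).1)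
    (List.forall_mem_map.mpr fun n hn => List.forall_mem_map.mpr fun m hm => by
      simpa only [hperiod] using hfg n (hmem n hn) m (hmem m hm))
  rw [M.rowSum_map hperiod, M.rowSum_map hperiod, ← sum_Icc_eq_sum_map hL,
    ← sum_Icc_eq_sum_map hL, ← Finset.sum_add_distrib] at hbound
  exact_mod_cast hbound

end Model

end EliminationScheme
/-- The function `slope * x / period + (lin * k + const) / scale` of `x`. -/
structure Affine where
  period : ℕ
  slope : ℕ
  lin : ℕ
  const : ℕ

namespace Affine

/-- The common denominator `12!` of the rounded coefficients. -/
def scale : ℕ := 479001600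

/-- The linear upper bound for the coprime count of `n`. -/
def start (n : ℕ) : Affine := ⟨n, n.totient, 0, (scale * discrepancy n) ⌈/⌉ n⟩

/-- The bound for `A x + B y` obtained by inserting the largest `y` that is coupled to `x`. -/
def combine (A B : Affine) : Affine where
  period := A.period
  slope := A.slope - B.slope
  lin := A.lin + B.lin + (scale * B.slope) ⌈/⌉ (A.period * B.period)
  const := A.const + B.const

/-- `K A`, with the fields of `A` evaluated first. -/
def force {α : Type} (A : Affine) (K : Affine → α) : α :=
  forceEval A.period fun n => forceEval A.slope fun s => forceEval A.lin fun c =>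
    forceEval A.const fun d => K ⟨n, s, c, d⟩

/-- Elimination with linear upper bounds; these are monotone already. -/
def scheme : EliminationScheme Affine := ⟨slope, id, combine, force⟩

/-- The function represented by `A`. -/
def value (k : ℕ) (A : Affine) (x : ℤ) : ℚ :=
  A.slope * x / A.period + (A.lin * k + A.const) / scale

lemma monotone_value (k : ℕ) (A : Affine) : Monotone (value k A) := by
  intro x y hxy
  unfold value
  gcongr

lemma div_le_ceilDiv_scale_div (a : ℕ) {b : ℕ} (hb : 0 < b) :
    (a / b : ℚ) ≤ ((scale * a) ⌈/⌉ b : ℕ) / scale := by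
  have hceil : scale * a ≤ b * ((scale * a) ⌈/⌉ b) := (ceilDiv_le_iff_le_mul hb).mp le_rfl
  have hscale : (0 : ℚ) < scale := by norm_num [scale]
  rw [div_le_div_iff₀ (by exact_mod_cast hb) hscale, mul_comm (a : ℚ), mul_comm _ (b : ℚ)]
  exact_mod_cast hceil

lemma value_add_value_le {k : ℕ} {A B : Affine} (hA : 0 < A.period) (hB : 0 < B.period)
    (hslope : B.slope ≤ A.slope) {x y : ℤ} (hxy : x * B.period + y * A.period ≤ k) :
    value k A x + value k B y ≤ value k (combine A B) x := by
  have : (0 : ℚ) < A.period := by exact_mod_cast hA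
  have : (0 : ℚ) < B.period := by exact_mod_cast hB
  have hxy' : (x * B.period + y * A.period : ℚ) ≤ k := by exact_mod_cast hxy
  have hy : (B.slope * y / B.period : ℚ) ≤
      B.slope / (A.period * B.period) * k - B.slope * x / A.period := by
    have := mul_le_mul_of_nonneg_left hxy' (a := (B.slope / (A.period * B.period) : ℚ))
      (by positivity)
    have hexpand : (B.slope / (A.period * B.period) * (x * B.period + y * A.period) : ℚ) =
        B.slope * x / A.period + B.slope * y / B.period := by
      field_simp
    linarith
  have hround := mul_le_mul_of_nonneg_right
    (div_le_ceilDiv_scale_div B.slope (Nat.mul_pos hA hB)) (Nat.cast_nonneg (α := ℚ) k)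
  simp only [value, combine, Nat.cast_sub hslope]
  push_cast at hround ⊢
  simp only [add_mul, sub_mul, add_div, sub_div, mul_div_right_comm] at hy hround ⊢
  linarith

/-- The values of the linear bounds. -/
def model (k : ℕ) : scheme.Model k where
  period := period
  value := value k
  Valid A := 0 < A.period
  force_eq A K := by simp [scheme, force]
  slope_hull _ := rfl
  period_hull _ := rfl
  valid_hull hA := hA
  monotone_hull _ := monotone_value k _
  le_hull _ _ := le_rfl
  period_combine _ _ := rfl
  valid_combine hA _ := hA
  add_le_combine hA hB _ hslope _ _ hxy := value_add_value_le hA hB hslope hxy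

lemma isRow_start (k : ℕ) {n : ℕ} (hn : 0 < n) : (model k).IsRow (start n) where
  valid := hn
  monotone := monotone_value k _
  le_value x := by
    have hn' : (0 : ℚ) < n := by exact_mod_cast hn
    have hround := div_le_ceilDiv_scale_div (discrepancy n) hn
    have hcount : (n * signedCoprimeCount n x : ℚ) ≤ n.totient * x + discrepancy n := by
      exact_mod_cast mul_signedCoprimeCount_le hn x
    calc (signedCoprimeCount n x : ℚ)
        ≤ n.totient * x / n + discrepancy n / n := by
          rwa [← add_div, le_div_iff₀' hn']
      _ ≤ value k (start n) x := by
          simp only [value, start, Nat.cast_zero, zero_mul, zero_add]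
          linarith

end Affine

/-- The number with base `b` digits `m, step i m, step (i + 1) (step i m), …`, of which there are
`n`, least significant first. -/
def pack (b : ℕ) (step : ℕ → ℕ → ℕ) (n i m : ℕ) : ℕ :=
  Nat.rec (fun _ _ => 0) (fun _ ih i m =>
    forceEval m fun m => Nat.add m (Nat.mul b (ih (Nat.succ i) (step i m)))) n i m

lemma pack_succ (b : ℕ) (step : ℕ → ℕ → ℕ) (n i m : ℕ) :
    pack b step (n + 1) i m = m + b * pack b step n (i + 1) (step i m) :=
  forceEval_eq m fun m => m + b * pack b step n (i + 1) (step i m)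

lemma pack_div_pow_mod_add {b : ℕ} {step : ℕ → ℕ → ℕ} {c : ℕ → ℕ}
    (hc : ∀ i, c (i + 1) = step i (c i)) {n i j : ℕ} (hb : ∀ l < n, c (i + l) < b) (hj : j < n) :
    pack b step n i (c i) / b ^ j % b = c (i + j) := by
  induction n generalizing i j with
  | zero => exact absurd hj j.not_lt_zero
  | succ n ih =>
    have hi : c i < b := hb 0 n.succ_pos
    rw [pack_succ, ← hc]
    rcases j with _ | j
    · rw [pow_zero, Nat.div_one, Nat.add_mul_mod_self_left, Nat.mod_eq_of_lt hi, add_zero]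
    · have htail (l : ℕ) (hl : l < n) : c (i + 1 + l) < b := by
        simpa only [add_assoc, add_comm 1] using hb (l + 1) (Nat.succ_lt_succ hl)
      rw [pow_succ', ← Nat.div_div_eq_div_mul, Nat.add_mul_div_left _ _ (by omega),
        Nat.div_eq_of_lt hi, zero_add, ih htail (Nat.lt_of_succ_lt_succ hj), add_assoc, add_comm 1]

lemma pack_div_pow_mod {b : ℕ} {step : ℕ → ℕ → ℕ} {c : ℕ → ℕ}
    (hc : ∀ i, c (i + 1) = step i (c i)) {n j : ℕ} (hb : ∀ l < n, c l < b) (hj : j < n) :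
    pack b step n 0 (c 0) / b ^ j % b = c j := by
  simpa only [zero_add] using pack_div_pow_mod_add hc (i := 0) (by simpa only [zero_add]) hj

/-- The function `x ↦ d (x % period) + slope * (x / period) - offset`, where the numbers
`d 0, d 1, …` are the base `base` digits of `digits`. -/
structure Table where
  period : ℕ
  slope : ℕ
  offset : ℕ
  base : ℕ
  digits : ℕ

namespace Table

/-- The value of a table at `0 ≤ i < period`, without the offset. Here and below `Nat.mod`,
`Nat.div` and the like are written out because the kernel computes them on literals directly. -/
def digit (A : Table) (i : ℕ) : ℕ := Nat.mod (Nat.div A.digits (Nat.pow A.base i)) A.base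

/-- The value of a table at `x ≥ 0`, without the offset. -/
def evalNat (A : Table) (x : ℕ) : ℕ :=
  Nat.add (A.digit (Nat.mod x A.period)) (Nat.mul A.slope (Nat.div x A.period))

/-- The function represented by `A`. -/
def value (A : Table) (x : ℤ) : ℤ :=
  A.digit (x % A.period).toNat + A.slope * (x / A.period) - A.offset

/-- The coprime count of `n`. -/
def start (n : ℕ) : Table :=
  ⟨n, n.totient, 0, n + 1,
    pack (n + 1) (fun i c => c + if n.Coprime (i + 1) then 1 else 0) n 0 0⟩

/-- The least monotone majorant. -/
def hull (A : Table) : Table :=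
  { A with
    digits := pack A.base (fun i m => Nat.add m (Nat.sub (A.digit (Nat.succ i)) m)) A.period 0
      (max (A.digit 0) (maxBelow A.digit A.period - A.slope)) }

/-- The part of `combine` that is due to `B`: up to the offset, the value of `B` at the largest `y`
that is coupled to `i`. -/
def coupledDigit (k : ℕ) (A B : Table) (i : ℕ) : ℕ :=
  B.evalNat (Nat.div (Nat.add k (Nat.mul (Nat.sub A.period i) B.period)) A.period)

/-- The bound for `A x + B y` obtained by inserting the largest `y` that is coupled to `x`. -/
def combine (k : ℕ) (A B : Table) : Table :=
  forceEval (A.base + B.base + B.slope * (k / (A.period * B.period) + 1)) fun b =>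
    { period := A.period
      slope := A.slope - B.slope
      offset := A.offset + B.offset + B.slope
      base := b
      digits := pack b (fun i _ => Nat.add (A.digit (Nat.succ i)) (coupledDigit k A B (Nat.succ i)))
        A.period 0 (A.digit 0 + coupledDigit k A B 0) }

/-- `K A`, with the fields of `A` evaluated first. -/
def force {α : Type} (A : Table) (K : Table → α) : α :=
  forceEval A.period fun n => forceEval A.slope fun s => forceEval A.offset fun o =>
    forceEval A.base fun b => forceEval A.digits fun d => K ⟨n, s, o, b, d⟩

/-- Elimination with exact periodic functions. -/
def scheme (k : ℕ) : EliminationScheme Table := ⟨slope, hull, combine k, force⟩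

/-- The nondegeneracy that makes the digits of a table meaningful. -/
structure Valid (A : Table) : Prop where
  period_pos : 0 < A.period
  base_pos : 0 < A.base

lemma Valid.digit_lt {A : Table} (hA : A.Valid) (i : ℕ) : A.digit i < A.base :=
  Nat.mod_lt _ hA.base_pos

lemma Valid.value_add_mul {A : Table} (hA : A.Valid) {r : ℕ} (hr : r < A.period) (q : ℤ) :
    A.value (r + A.period * q) = A.digit r + A.slope * q - A.offset := by
  have hr' : (r : ℤ) < A.period := by exact_mod_cast hr
  rw [value, Int.add_mul_ediv_left _ _ (by have := hA.period_pos; omega),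
    Int.add_mul_emod_self_left, Int.emod_eq_of_lt (Int.natCast_nonneg r) hr',
    Int.ediv_eq_zero_of_lt (Int.natCast_nonneg r) hr', Int.toNat_natCast, zero_add]

lemma Valid.value_sub_mul {A : Table} (hA : A.Valid) (x q : ℤ) :
    A.value (x - A.period * q) = A.value x - A.slope * q := by
  obtain ⟨r, p, hr, rfl⟩ := exists_eq_natCast_add_mul hA.period_pos x
  rw [add_sub_assoc, ← mul_sub, hA.value_add_mul hr, hA.value_add_mul hr]
  ring

lemma evalNat_eq (A : Table) (x : ℕ) : (A.evalNat x : ℤ) = A.value x + A.offset := by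
  have hmod : ((x : ℤ) % A.period).toNat = x % A.period := by
    rw [← Int.natCast_mod, Int.toNat_natCast]
  rw [value, hmod, sub_add_cancel]
  push_cast [evalNat]
  rfl

lemma Valid.monotone_value {A : Table} (hA : A.Valid)
    (hstep : ∀ i, i + 1 < A.period → A.digit i ≤ A.digit (i + 1))
    (hwrap : A.digit (A.period - 1) ≤ A.digit 0 + A.slope) : Monotone A.value := by
  refine monotone_int_of_le_succ fun x => ?_
  obtain ⟨r, q, hr, rfl⟩ := exists_eq_natCast_add_mul hA.period_pos x
  rw [hA.value_add_mul hr]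
  rcases (Nat.succ_le_of_lt hr).lt_or_eq with hr' | hr'
  · have hshift : (r : ℤ) + A.period * q + 1 = (r + 1 : ℕ) + A.period * q := by push_cast; ring
    rw [hshift, hA.value_add_mul hr']
    have : A.digit r ≤ A.digit r.succ := hstep r hr'
    omega
  · have hshift : (r : ℤ) + A.period * q + 1 = (0 : ℕ) + A.period * (q + 1) := by
      rw [← hr']; push_cast; ring
    rw [hshift, hA.value_add_mul hA.period_pos, mul_add_one]
    rw [← hr', Nat.succ_sub_one] at hwrap
    omega

lemma Valid.digit_hull {A : Table} (hA : A.Valid) {i : ℕ} (hi : i < A.period) :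
    A.hull.digit i = max (maxBelow A.digit (i + 1)) (maxBelow A.digit A.period - A.slope) := by
  let c (i : ℕ) := max (maxBelow A.digit (i + 1)) (maxBelow A.digit A.period - A.slope)
  have hc0 : c 0 = max (A.digit 0) (maxBelow A.digit A.period - A.slope) := by
    simp only [c, maxBelow_succ]
    exact congrArg (max · _) (Nat.zero_max _)
  have hstep (i : ℕ) : c (i + 1) = c i + (A.digit (i + 1) - c i) := by
    rw [add_tsub_eq_max]
    simp only [c, maxBelow_succ A.digit (i + 1)]
    exact max_right_comm _ _ _
  have hlt (i : ℕ) : c i < A.base :=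
    max_lt (maxBelow_lt hA.digit_lt _) ((Nat.sub_le _ _).trans_lt (maxBelow_lt hA.digit_lt _))
  have hpack := pack_div_pow_mod (step := fun i m => m + (A.digit (i + 1) - m)) hstep
    (fun l _ => hlt l) hi
  rw [hc0] at hpack
  exact hpack

lemma Valid.hull {A : Table} (hA : A.Valid) : A.hull.Valid := ⟨hA.period_pos, hA.base_pos⟩

lemma Valid.monotone_value_hull {A : Table} (hA : A.Valid) : Monotone A.hull.value := by
  refine hA.hull.monotone_value (fun i hi => ?_) ?_
  · rw [hA.digit_hull hi, hA.digit_hull (Nat.lt_of_succ_lt hi)]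
    exact max_le_max_right _ (monotone_maxBelow A.digit (i + 1).le_succ)
  · have hlast := hA.digit_hull (Nat.sub_lt hA.period_pos one_pos)
    rw [Nat.sub_one_add_one_eq_of_pos hA.period_pos] at hlast
    change A.hull.digit (A.period - 1) ≤ A.hull.digit 0 + A.slope
    rw [hlast, hA.digit_hull hA.period_pos]
    omega

lemma Valid.value_le_value_hull {A : Table} (hA : A.Valid) (x : ℤ) :
    A.value x ≤ A.hull.value x := by
  obtain ⟨r, q, hr, rfl⟩ := exists_eq_natCast_add_mul hA.period_pos x
  have hhull : A.hull.value (r + A.period * q) = A.hull.digit r + A.slope * q - A.offset :=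
    hA.hull.value_add_mul hr q
  rw [hA.value_add_mul hr, hhull, hA.digit_hull hr, maxBelow_succ]
  omega

lemma Valid.coupledDigit_lt {k : ℕ} {A B : Table} (hA : A.Valid) (hB : B.Valid) (i : ℕ) :
    coupledDigit k A B i < B.base + B.slope * (k / (A.period * B.period) + 1) := by
  have hpos := Nat.mul_pos hA.period_pos hB.period_pos
  refine Nat.add_lt_add_of_lt_of_le (hB.digit_lt _) (Nat.mul_le_mul_left _ ?_)
  calc (k + (A.period - i) * B.period) / A.period / B.period
      ≤ (k + A.period * B.period) / (A.period * B.period) := by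
        rw [Nat.div_div_eq_div_mul]
        gcongr
        exact Nat.sub_le _ _
    _ = k / (A.period * B.period) + 1 := Nat.add_div_right k hpos

lemma Valid.digit_combine {k : ℕ} {A B : Table} (hA : A.Valid) (hB : B.Valid) {i : ℕ}
    (hi : i < A.period) :
    (combine k A B).digit i = A.digit i + coupledDigit k A B i := by
  let c (i : ℕ) := A.digit i + coupledDigit k A B i
  have hpack := pack_div_pow_mod (c := c) (step := fun i _ => c (i + 1)) (fun _ => rfl)
    (b := A.base + B.base + B.slope * (k / (A.period * B.period) + 1)) (fun l _ => by
      rw [add_assoc]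
      exact Nat.add_lt_add (hA.digit_lt _) (hA.coupledDigit_lt hB _)) hi
  rw [combine, forceEval_eq]
  exact hpack

lemma Valid.combine {A : Table} (hA : A.Valid) (k : ℕ) (B : Table) : (combine k A B).Valid := by
  rw [Table.combine, forceEval_eq]
  exact ⟨hA.period_pos, by have := hA.base_pos; positivity⟩

lemma Valid.value_combine {k : ℕ} {A B : Table} (hA : A.Valid) (hB : B.Valid)
    (hslope : B.slope ≤ A.slope) {r : ℕ} (hr : r < A.period) (q : ℤ) :
    (Table.combine k A B).value (r + A.period * q) =
      A.value (r + A.period * q) + B.value ((k - (r + A.period * q) * B.period) / A.period) := by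
  have hp : (A.period : ℤ) ≠ 0 := by have := hA.period_pos; omega
  have hperiod : (Table.combine k A B).period = A.period := by simp [Table.combine]
  have hvalue := (hA.combine k B).value_add_mul (r := r) (hperiod ▸ hr) q
  have harg : ((k - (r + A.period * q) * B.period) / A.period : ℤ) =
      ((k + (A.period - r) * B.period) / A.period : ℕ) - B.period * (q + 1) := by
    push_cast [hr.le]
    rw [← Int.sub_mul_ediv_right _ _ hp]
    congr 1
    ring
  have hcoupled : (coupledDigit k A B r : ℤ) =
      B.value ((k + (A.period - r) * B.period) / A.period : ℕ) + B.offset := B.evalNat_eq _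
  rw [hperiod, hA.digit_combine hB hr] at hvalue
  rw [hvalue, harg, hB.value_sub_mul, hA.value_add_mul hr, Nat.cast_add, hcoupled]
  simp only [Table.combine, forceEval_eq, Nat.cast_add, Nat.cast_sub hslope]
  ring

lemma Valid.value_add_value_le {k : ℕ} {A B : Table} (hA : A.Valid) (hB : B.Valid)
    (hmono : Monotone B.value) (hslope : B.slope ≤ A.slope) {x y : ℤ}
    (hxy : x * B.period + y * A.period ≤ k) :
    A.value x + B.value y ≤ (Table.combine k A B).value x := by
  obtain ⟨r, q, hr, rfl⟩ := exists_eq_natCast_add_mul hA.period_pos x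
  rw [hA.value_combine hB hslope hr]
  gcongr
  refine hmono ((Int.le_ediv_iff_mul_le (by exact_mod_cast hA.period_pos)).mpr ?_)
  linarith

/-- The values of the tables. -/
def model (k : ℕ) : (scheme k).Model k where
  period := period
  value A x := A.value x
  Valid := Valid
  force_eq A K := by simp [scheme, force]
  slope_hull _ := rfl
  period_hull _ := rfl
  valid_hull hA := hA.hull
  monotone_hull hA _ _ hxy := Int.cast_le.mpr (hA.monotone_value_hull hxy)
  le_hull hA x := Int.cast_le.mpr (hA.value_le_value_hull x)
  period_combine _ _ := by simp [scheme, combine]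
  valid_combine hA _ := hA.combine k _
  add_le_combine hA hB hmono hslope x y hxy := by
    rw [← Int.cast_add, Int.cast_le]
    exact hA.value_add_value_le hB (fun _ _ h => Int.cast_le.mp (hmono h)) hslope hxy

lemma valid_start {n : ℕ} (hn : 0 < n) : (start n).Valid := ⟨hn, n.succ_pos⟩

lemma value_start {n : ℕ} (hn : 0 < n) (x : ℤ) : (start n).value x = signedCoprimeCount n x := by
  obtain ⟨r, q, hr, rfl⟩ := exists_eq_natCast_add_mul hn x
  have hdigit : (start n).digit r = coprimeCount n r := by
    refine pack_div_pow_mod (c := coprimeCount n) (coprimeCount_succ n) (fun l hl => ?_) hr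
    rw [coprimeCount_eq_card]
    refine (Finset.card_filter_le _ _).trans_lt ?_
    rw [Nat.card_Ioc]
    omega
  rw [signedCoprimeCount_add_mul hn, signedCoprimeCount_natCast hr,
    show (start n).value (r + n * q) = _ from (valid_start hn).value_add_mul hr q, hdigit]
  simp [start]

lemma isRow_start (k : ℕ) {n : ℕ} (hn : 0 < n) : (model k).IsRow (start n) where
  valid := valid_start hn
  monotone x y hxy := Int.cast_le.mpr <| by
    rw [value_start hn, value_start hn]
    exact monotone_signedCoprimeCount hn hxy
  le_value x := Int.cast_le.mpr (value_start hn x).ge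

end Table

/-! ### Heights at most 180 -/

lemma prime_of_coprime_factorial {m n : ℕ} (hm : 1 < m) (hmn : m < (n + 1) ^ 2)
    (h : m.Coprime n.factorial) : m.Prime := by
  by_contra hprime
  have hsq : m.minFac ^ 2 ≤ m := Nat.minFac_sq_le_self (by omega) hprime
  have hle : m.minFac ≤ n := Nat.lt_succ_iff.mp (lt_of_pow_lt_pow_left₀ 2 (by omega)
    (hsq.trans_lt hmn))
  have hp := Nat.minFac_prime hm.ne'
  exact Nat.not_coprime_of_dvd_of_dvd hp.one_lt m.minFac_dvd
    ((hp.dvd_factorial).mpr hle) h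

/-- A sufficient test for a prime in `(k, k + 5]`. -/
def primeTest (k : ℕ) : Bool :=
  [1, 2, 3, 4, 5].any fun i =>
    decide (k + i < 43 ^ 2) && decide ((k + i).Coprime (Nat.factorial 42))

lemma exists_prime_of_primeTest {k : ℕ} (hk : 0 < k) (h : primeTest k = true) :
    ∃ p, p.Prime ∧ k < p ∧ p ≤ k + 5 := by
  simp only [primeTest, List.any_eq_true, Bool.and_eq_true, decide_eq_true_eq] at h
  obtain ⟨i, hi, hlt, hcoprime⟩ := h
  have hi' : 1 ≤ i ∧ i ≤ 5 := by
    simp only [List.mem_cons, List.not_mem_nil, or_false] at hi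
    omega
  exact ⟨k + i, prime_of_coprime_factorial (by omega) hlt hcoprime, by omega, by omega⟩

/-- Orders of elimination. The natural one suffices with few exceptions; the other two were found by
a search and settle these. -/
def orders (h : ℕ) : List (List ℕ) :=
  List.range' 1 h :: if h ≤ 20 then
    [[2, 6, 4, 1, 5, 7, 3, 8, 10, 12, 9, 11, 13, 15, 14, 16, 18, 17, 20, 19].filter (· ≤ h),
      [1, 2, 4, 5, 18, 3, 6, 7, 8, 10, 9, 11, 12, 15, 13, 16, 14, 17, 19, 20].filter (· ≤ h)]
  else []

lemma perm_of_mem_orders {h : ℕ} {L : List ℕ} (hL : L ∈ orders h) : L.Perm (List.range' 1 h) := by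
  rcases List.mem_cons.mp hL with rfl | hL
  · rfl
  · split_ifs at hL with hh
    · revert L
      interval_cases h <;> decide
    · exact absurd hL List.not_mem_nil

/-- The bound for the total coprime count found by eliminating tables in the order `L`. -/
def tableBound (k : ℕ) (L : List ℕ) : Option ℕ :=
  (Table.scheme k).forceMap Table.start L fun rows =>
    ((Table.scheme k).eliminate rows).bind fun A =>
      if 0 < A.period ∧ A.slope = 0 then some (maxBelow A.digit A.period - A.offset) else none

lemma totalCountLE_of_tableBound {k h v : ℕ} {L : List ℕ} (hL : L.Perm (List.range' 1 h))
    (hv : tableBound k L = some v) : TotalCountLE k h v := by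
  rw [tableBound, (Table.model k).forceMap_eq, Option.bind_eq_some_iff] at hv
  obtain ⟨A, helim, hA⟩ := hv
  split_ifs at hA with hslope
  obtain rfl := Option.some.inj hA
  rw [← Int.floor_intCast (R := ℚ) (maxBelow A.digit A.period - A.offset : ℕ)]
  refine (Table.model k).totalCountLE (fun _ => rfl) (fun _ => Table.isRow_start k) hL helim
    fun x => Int.cast_le.mpr ?_
  have hdigit : A.digit (x % A.period).toNat ≤ maxBelow A.digit A.period :=
    le_maxBelow A.digit (by have := Int.emod_lt_of_pos x (Int.natCast_pos.mpr hslope.1); omega)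
  rw [Table.value, hslope.2, Nat.cast_zero, zero_mul]
  omega

/-- Checks `TotalCountLE k h (k + 4)` for `k` from the given value down to `lo`, skipping those with
a prime in `(k, k + 5]`, in at most `fuel` steps. A bound `v` for one `k` also settles the smaller
ones down to `v - 4`. -/
def sweep (h lo : ℕ) : ℕ → ℕ → Bool
  | 0, _ => false
  | fuel + 1, k => forceEval k fun k =>
    if k < lo then true
    else if primeTest k then sweep h lo fuel (k - 1)
    else (orders h).any fun L =>
      (tableBound k L).any fun v => decide (v ≤ k + 4) && sweep h lo fuel (v - 5)

lemma totalCountLE_of_sweep {h lo fuel k : ℕ} (hlo : 0 < lo) (hsweep : sweep h lo fuel k = true)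
    {k' : ℕ} (hk' : lo ≤ k') (hkk' : k' ≤ k) (hprime : ∀ p, p.Prime → k' < p → k' + 5 < p) :
    TotalCountLE k' h (k' + 4) := by
  induction fuel generalizing k with
  | zero => cases hsweep
  | succ fuel ih =>
    rw [sweep, forceEval_eq, if_neg (by omega)] at hsweep
    split_ifs at hsweep with htest
    · rcases hkk'.lt_or_eq with hlt | rfl
      · exact ih hsweep (by omega)
      · obtain ⟨p, hp, hlt, hle⟩ := exists_prime_of_primeTest (by omega) htest
        exact absurd (hprime p hp hlt) (by omega)
    · simp only [List.any_eq_true, Option.any_eq_true, Bool.and_eq_true] at hsweep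
      obtain ⟨L, hL, v, hv, -, hrest⟩ := hsweep
      by_cases hvk : v ≤ k' + 4
      · exact (totalCountLE_of_tableBound (perm_of_mem_orders hL) hv).mono hkk' (by omega)
      · exact ih hrest (by omega)

/-- Checks `TotalCountLE k h (k + 4)` for all `k` with `3 * h ^ 2 ≤ 4 * k` and no
prime in `(k, k + 5]`: for large `k` by means of the linear rows `A`, for the others by `sweep`. -/
def heightCheck (h : ℕ) (A : List Affine) : Bool :=
  (Affine.scheme.eliminate A).any fun s =>
    decide (s.slope = 0) && decide (s.lin ≤ Affine.scale) &&
    forceEval ((s.const - 5 * Affine.scale) / (Affine.scale - s.lin) + 1) fun t =>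
      decide (s.lin * t + s.const < (t + 5) * Affine.scale) &&
      sweep h ((3 * h ^ 2 + 3) / 4) t (t - 1)

lemma totalCountLE_of_affine {k h t : ℕ} {s : Affine}
    (helim : Affine.scheme.eliminate ((List.range' 1 h).map Affine.start) = some s)
    (hslope : s.slope = 0) (hlin : s.lin ≤ Affine.scale)
    (ht : s.lin * t + s.const < (t + 5) * Affine.scale) (htk : t ≤ k) :
    TotalCountLE k h (k + 4) := by
  have hscale : (0 : ℚ) < Affine.scale := by norm_num [Affine.scale]
  have hbound := (Affine.model k).totalCountLE (fun _ => rfl) (fun _ => Affine.isRow_start k)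
    (.refl _) helim (v := (s.lin * k + s.const) / Affine.scale) fun x => by
      change Affine.value k s x ≤ _
      simp [Affine.value, hslope]
  refine hbound.mono le_rfl (Int.lt_add_one_iff.mp (Int.floor_lt.mpr ?_))
  have hk : s.lin * k + s.const < (k + 5) * Affine.scale := by
    obtain ⟨d, rfl⟩ := Nat.exists_eq_add_of_le htk
    have := Nat.mul_le_mul_left d hlin
    linarith
  rw [div_lt_iff₀ hscale]
  push_cast [add_assoc]
  exact_mod_cast hk

lemma totalCountLE_of_heightCheck {h : ℕ} (hh : 0 < h)
    (hcheck : heightCheck h ((List.range' 1 h).map Affine.start) = true) {k : ℕ}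
    (hk : 3 * h ^ 2 ≤ 4 * k) (hprime : ∀ p, p.Prime → k < p → k + 5 < p) :
    TotalCountLE k h (k + 4) := by
  simp only [heightCheck, Option.any_eq_true, Bool.and_eq_true, forceEval_eq, decide_eq_true_eq]
    at hcheck
  obtain ⟨s, helim, ⟨hslope, hlin⟩, hlarge, hsweep⟩ := hcheck
  rcases le_or_gt ((s.const - 5 * Affine.scale) / (Affine.scale - s.lin) + 1) k with htk | hkt
  · exact totalCountLE_of_affine helim hslope hlin hlarge htk
  · have := pow_pos hh 2
    exact totalCountLE_of_sweep (by omega) hsweep (by omega) (by omega) hprime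

/-- Checks all heights from `lo` to `hi`. The linear rows are built only once. -/
def heightsCheck (lo hi : ℕ) : Bool :=
  Affine.scheme.forceMap Affine.start (List.range' 1 hi) fun A =>
    (List.range' lo (hi + 1 - lo)).all fun h => forceEval h fun h => heightCheck h (A.take h)

lemma totalCountLE_of_heightsCheck {lo hi : ℕ} (hcheck : heightsCheck lo hi = true) {k h : ℕ}
    (hh : 0 < h) (hlo : lo ≤ h) (hhi : h ≤ hi) (hk : 3 * h ^ 2 ≤ 4 * k)
    (hprime : ∀ p, p.Prime → k < p → k + 5 < p) : TotalCountLE k h (k + 4) := by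
  rw [heightsCheck, (Affine.model 0).forceMap_eq, List.all_eq_true] at hcheck
  have hrow := hcheck h (List.mem_range'_1.mpr (by omega))
  rw [forceEval_eq, ← List.map_take, List.take_range'_of_length_ge hhi] at hrow
  exact totalCountLE_of_heightCheck hh hrow hk hprime

set_option maxRecDepth 100000 in
lemma heightsCheck_1_32 : heightsCheck 1 32 = true := by decide +kernel

set_option maxRecDepth 100000 in
lemma heightsCheck_33_47 : heightsCheck 33 47 = true := by decide +kernel

set_option maxRecDepth 100000 in
lemma heightsCheck_48_180 : heightsCheck 48 180 = true := by decide +kernel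

lemma totalCountLE_of_le_180 {k h : ℕ} (hh : 0 < h) (hh' : h ≤ 180) (hk : 3 * h ^ 2 ≤ 4 * k)
    (hprime : ∀ p, p.Prime → k < p → k + 5 < p) : TotalCountLE k h (k + 4) := by
  rcases le_or_gt h 32 with h32 | h32
  · exact totalCountLE_of_heightsCheck heightsCheck_1_32 hh hh h32 hk hprime
  rcases le_or_gt h 47 with h47 | h47
  · exact totalCountLE_of_heightsCheck heightsCheck_33_47 hh h32 h47 hk hprime
  · exact totalCountLE_of_heightsCheck heightsCheck_48_180 hh h47 hh' hk hprime

/-! ### Heights greater than 180 -/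

lemma sum_range_le_of_periodic {u : ℕ → ℕ} {M : ℕ} (hM : 0 < M) (hu : Function.Periodic u M)
    {D S C : ℕ} (hperiod : D * ∑ i ∈ Finset.range M, u i ≤ S * M)
    (hlt : ∀ x < M, D * ∑ i ∈ Finset.range x, u i ≤ S * x + C) (x : ℕ) :
    D * ∑ i ∈ Finset.range x, u i ≤ S * x + C := by
  induction x using Nat.strong_induction_on with
  | _ x ih =>
    rcases lt_or_ge x M with hx | hx
    · exact hlt x hx
    · obtain ⟨y, rfl⟩ := Nat.exists_eq_add_of_le hx
      have hshift : ∑ i ∈ Finset.range y, u (M + i) = ∑ i ∈ Finset.range y, u i :=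
        Finset.sum_congr rfl fun i _ => by rw [add_comm, hu]
      rw [Finset.sum_range_add, hshift, mul_add, mul_add]
      linarith [ih y (by omega)]

/-- A decision procedure for the hypotheses of `sum_range_le_of_periodic`: the remaining `k` of the
terms `u x, u (x + 1), …` are added one by one to the partial sum `s`. -/
def partialSumsLE (D S C : ℕ) (u : ℕ → ℕ) : ℕ → ℕ → ℕ → Bool
  | 0, x, s => Nat.ble (D * s) (S * x)
  | k + 1, x, s => Nat.ble (D * s) (S * x + C) &&
      forceEval (s + u x) fun s => partialSumsLE D S C u k (x + 1) s

lemma sum_range_le_of_partialSumsLE {D S C : ℕ} {u : ℕ → ℕ} {k x : ℕ}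
    (h : partialSumsLE D S C u k x (∑ i ∈ Finset.range x, u i) = true) :
    D * ∑ i ∈ Finset.range (x + k), u i ≤ S * (x + k) ∧
      ∀ y < k, D * ∑ i ∈ Finset.range (x + y), u i ≤ S * (x + y) + C := by
  induction k generalizing x with
  | zero => exact ⟨Nat.le_of_ble_eq_true h, by simp⟩
  | succ k ih =>
    rw [partialSumsLE, Bool.and_eq_true, forceEval_eq, ← Finset.sum_range_succ] at h
    obtain ⟨htotal, hlt⟩ := ih h.2
    refine ⟨by rwa [add_right_comm] at htotal, fun y hy => ?_⟩
    rcases y with _ | y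
    · exact Nat.le_of_ble_eq_true h.1
    · have := hlt y (by omega)
      rwa [add_right_comm] at this

/-- With `g = gcd n N`, the coefficient `N φ(g) / g` of the sieve bound
`mul_signedCoprimeCount_add_le`. -/
def sieveSlope (N n : ℕ) : ℕ := forceEval (Nat.gcd n N) fun g => g.totient * (N / g)

/-- With `g = gcd n N`, the error term of the sieve bound `mul_signedCoprimeCount_add_le`. -/
def sieveError (N n : ℕ) : ℕ :=
  forceEval (Nat.gcd n N) fun g => (2 * discrepancy g + if g = 1 then 1 else 0) * (N / g)

lemma periodic_sieveSlope (N : ℕ) :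
    Function.Periodic (fun i => sieveSlope N (i + 1)) N := fun i => by
  simp only [sieveSlope, add_right_comm i N 1, Nat.gcd_add_self_left]

lemma periodic_sieveError (N : ℕ) :
    Function.Periodic (fun i => sieveError N (i + 1)) N := fun i => by
  simp only [sieveError, add_right_comm i N 1, Nat.gcd_add_self_left]

-- The means over a period are `27648 / 210` and `9892 / 35`; no partial sum of the slopes exceeds
-- its mean value by more than `20436 / 210`.
set_option maxRecDepth 100000 in
lemma partialSumsLE_sieveSlope :
    partialSumsLE 210 27648 20436 (fun i => sieveSlope 210 (i + 1)) 210 0 0 = true := by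
  decide +kernel

set_option maxRecDepth 100000 in
lemma partialSumsLE_sieveError :
    partialSumsLE 35 9892 0 (fun i => sieveError 210 (i + 1)) 210 0 0 = true := by
  decide +kernel

lemma sum_sieveSlope_le (x : ℕ) :
    210 * ∑ i ∈ Finset.range x, sieveSlope 210 (i + 1) ≤ 27648 * x + 20436 := by
  have h := sum_range_le_of_partialSumsLE partialSumsLE_sieveSlope
  simp only [zero_add] at h
  exact sum_range_le_of_periodic (by norm_num) (periodic_sieveSlope 210) h.1 h.2 x

lemma sum_sieveError_le (x : ℕ) :
    35 * ∑ i ∈ Finset.range x, sieveError 210 (i + 1) ≤ 9892 * x := by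
  have h := sum_range_le_of_partialSumsLE partialSumsLE_sieveError
  simp only [zero_add] at h
  exact sum_range_le_of_periodic (by norm_num) (periodic_sieveError 210) h.1 h.2 x

lemma signedCoprimeCount_add_le_of_dvd {n g : ℕ} (hn : 0 < n) (hg : g ∣ n) {a b : ℤ}
    (hab : -1 ≤ a + b) :
    signedCoprimeCount n a + signedCoprimeCount n b + (if n = 1 then 1 else 0) ≤
      signedCoprimeCount g a + signedCoprimeCount g b + if g = 1 then 1 else 0 := by
  rw [← card_filter_coprime_Icc hn hab, ← card_filter_coprime_Icc (Nat.pos_of_dvd_of_pos hg hn) hab]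
  refine Int.ofNat_le.mpr (Finset.card_le_card (Finset.monotone_filter_right _ fun m _ hm => ?_))
  exact Nat.dvd_one.mp (hm ▸ Int.gcd_dvd_gcd_of_dvd_right m (Int.natCast_dvd_natCast.mpr hg))

lemma mul_signedCoprimeCount_add_le {N n : ℕ} (hN : 0 < N) (hn : 0 < n) {a b : ℤ}
    (hab : -1 ≤ a + b) :
    N * (signedCoprimeCount n a + signedCoprimeCount n b + if n = 1 then 1 else 0) ≤
      sieveSlope N n * (a + b) + sieveError N n := by
  have hdvd := signedCoprimeCount_add_le_of_dvd hn (Nat.gcd_dvd_left n N) hab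
  obtain ⟨j, hj⟩ := Nat.gcd_dvd_right n N
  simp only [sieveSlope, sieveError, forceEval_eq]
  have hg : 0 < Nat.gcd n N := Nat.gcd_pos_of_pos_left N hn
  generalize Nat.gcd n N = g at hj hdvd hg ⊢
  subst hj
  have hsum := add_le_add (mul_signedCoprimeCount_le hg a) (mul_signedCoprimeCount_le hg b)
  have hone : (g : ℤ) * (if g = 1 then 1 else 0) = if g = 1 then 1 else 0 := by
    split_ifs with h <;> simp [h]
  rw [Nat.mul_div_cancel_left j hg]
  push_cast
  nlinarith [mul_le_mul_of_nonneg_left hdvd (by positivity : (0 : ℤ) ≤ g * j),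
    mul_le_mul_of_nonneg_left hsum (Int.natCast_nonneg j), congrArg ((j : ℤ) * ·) hone]

lemma sum_mul_le_of_antitone {u V : ℕ → ℝ} {C : ℝ} (hV : Antitone V) (hV0 : ∀ i, 0 ≤ V i)
    (hu : ∀ x, ∑ i ∈ Finset.range x, u i ≤ C) (h : ℕ) :
    ∑ i ∈ Finset.range h, u i * V i ≤ C * V 0 := by
  have hpartial : ∑ i ∈ Finset.range h, u i * V i ≤
      C * (V 0 - V h) + (∑ i ∈ Finset.range h, u i) * V h := by
    induction h with
    | zero => simp
    | succ h ih =>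
      have := mul_le_mul_of_nonneg_right (hu (h + 1)) (sub_nonneg.mpr (hV h.le_succ))
      rw [Finset.sum_range_succ] at this ⊢
      rw [Finset.sum_range_succ u]
      linarith
  linarith [mul_le_mul_of_nonneg_right (hu h) (hV0 h)]

lemma sum_le_integral_ceil {V : ℕ → ℝ} (hV : Antitone V) (h : ℕ) :
    ∑ i ∈ Finset.range h, V (i + 1) ≤ ∫ x in (0 : ℝ)..h, V ⌈x⌉₊ := by
  have hanti : Antitone fun x : ℝ => V ⌈x⌉₊ := fun x y hxy => hV (Nat.ceil_mono hxy)
  simpa only [zero_add, Nat.ceil_natCast] using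
    (hanti.antitoneOn (Set.Icc (0 : ℝ) (0 + h))).sum_le_integral

/-- Both substitutions `x = r sin t` and `x = r cos t` turn the integral of `F` over `[0, r]` into
one over `[0, π / 2]`; the hypothesis bounds the sum of the two integrands. -/
lemma integral_le_of_quarter_circle {F : ℝ → ℝ} {r K : ℝ} (hr : 0 < r)
    (hF : IntervalIntegrable F MeasureTheory.volume 0 r)
    (hK : ∀ x ∈ Set.Ioo 0 r, ∀ y ∈ Set.Ioo 0 r, x ^ 2 + y ^ 2 = r ^ 2 → F x * y + F y * x ≤ 2 * K) :
    ∫ x in (0 : ℝ)..r, F x ≤ Real.pi / 2 * K := by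
  have hpi : 0 ≤ Real.pi / 2 := Real.pi_div_two_pos.le
  set G : ℝ → ℝ := fun t => F (r * Real.sin t) * (r * Real.cos t)
  have hcont : ContinuousOn (fun t => r * Real.sin t) (Set.uIcc 0 (Real.pi / 2)) := by fun_prop
  have hderiv : ∀ t ∈ Set.Ioo (min 0 (Real.pi / 2)) (max 0 (Real.pi / 2)),
      HasDerivAt (fun t => r * Real.sin t) (r * Real.cos t) t :=
    fun t _ => (Real.hasDerivAt_sin t).const_mul r
  have hnonneg : ∀ t ∈ Set.Ioo (min 0 (Real.pi / 2)) (max 0 (Real.pi / 2)),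
      0 ≤ r * Real.cos t := fun t ht => by
    rw [min_eq_left hpi, max_eq_right hpi] at ht
    exact mul_nonneg hr.le (Real.cos_nonneg_of_neg_pi_div_two_le_of_le (by linarith [ht.1]) ht.2.le)
  have hsubst : ∫ t in (0 : ℝ)..Real.pi / 2, G t = ∫ x in (0 : ℝ)..r, F x := by
    simpa using intervalIntegral.integral_comp_mul_deriv_of_deriv_nonneg (g := F)
      hcont hderiv hnonneg
  have hG : IntervalIntegrable G MeasureTheory.volume 0 (Real.pi / 2) :=
    (intervalIntegral.integrable_comp_mul_deriv_iff_of_deriv_nonneg hcont hderiv hnonneg).mpr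
      (by simpa using hF)
  have hreflect : ∫ t in (0 : ℝ)..Real.pi / 2, G (Real.pi / 2 - t) = ∫ x in (0 : ℝ)..r, F x := by
    simp [hsubst]
  have hG' : IntervalIntegrable (fun t => G (Real.pi / 2 - t)) MeasureTheory.volume
      0 (Real.pi / 2) := by
    simpa using (hG.comp_sub_left (Real.pi / 2)).symm
  have hle : ∫ t in (0 : ℝ)..Real.pi / 2, (G t + G (Real.pi / 2 - t)) ≤
      ∫ _ in (0 : ℝ)..Real.pi / 2, 2 * K := by
    refine intervalIntegral.integral_mono_on_of_le_Ioo hpi (hG.add hG') (by simp) fun t ht => ?_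
    have hsin : 0 < Real.sin t := Real.sin_pos_of_pos_of_lt_pi ht.1 (by linarith [ht.1, ht.2])
    have hcos : 0 < Real.cos t := Real.cos_pos_of_mem_Ioo ⟨by linarith [ht.1], ht.2⟩
    have hsq := Real.sin_sq_add_cos_sq t
    have hsin' : Real.sin t < 1 := by nlinarith
    have hcos' : Real.cos t < 1 := by nlinarith
    simp only [G, Real.sin_pi_div_two_sub, Real.cos_pi_div_two_sub]
    exact hK _ ⟨by positivity, mul_lt_of_lt_one_right hr hsin'⟩
      _ ⟨by positivity, mul_lt_of_lt_one_right hr hcos'⟩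
      (by linear_combination r ^ 2 * hsq)
  rw [intervalIntegral.integral_add hG hG', hsubst, hreflect] at hle
  simp only [intervalIntegral.integral_const_mul, intervalIntegral.integral_const, sub_zero,
    smul_eq_mul] at hle
  linarith

lemma sum_range_le_of_antitone {V : ℕ → ℝ} (hV : Antitone V) (hV0 : ∀ n, 0 ≤ V n) {h : ℕ}
    (hh : 0 < h) {K : ℝ}
    (hK : ∀ n ∈ Finset.Icc 1 h, ∀ m ∈ Finset.Icc 1 h, V n * m + V m * n ≤ 2 * K) :
    ∑ i ∈ Finset.range h, V (i + 1) ≤ Real.pi / 2 * K := by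
  have hanti : Antitone fun x : ℝ => V ⌈x⌉₊ := fun x y hxy => hV (Nat.ceil_mono hxy)
  have hceil {x : ℝ} (hx : x ∈ Set.Ioo 0 (h : ℝ)) : ⌈x⌉₊ ∈ Finset.Icc 1 h :=
    Finset.mem_Icc.mpr ⟨Nat.ceil_pos.mpr hx.1, Nat.ceil_le.mpr hx.2.le⟩
  refine (sum_le_integral_ceil hV h).trans
    (integral_le_of_quarter_circle (by exact_mod_cast hh) hanti.intervalIntegrable
      fun x hx y hy _ => ?_)
  calc V ⌈x⌉₊ * y + V ⌈y⌉₊ * x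
      ≤ V ⌈x⌉₊ * ⌈y⌉₊ + V ⌈y⌉₊ * ⌈x⌉₊ := by
        gcongr
        exacts [hV0 _, Nat.le_ceil y, hV0 _, Nat.le_ceil x]
    _ ≤ 2 * K := hK _ (hceil hx) _ (hceil hy)

/-- The least antitone function above `W` on `[0, h]`. -/
def envelope (h : ℕ) (W : ℕ → NNReal) (n : ℕ) : NNReal := (Finset.Icc n h).sup W

lemma antitone_envelope (h : ℕ) (W : ℕ → NNReal) : Antitone (envelope h W) := fun _ _ hnm =>
  Finset.sup_mono (Finset.Icc_subset_Icc_left hnm)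

lemma le_envelope {h n : ℕ} (W : ℕ → NNReal) (hn : n ≤ h) : W n ≤ envelope h W n :=
  Finset.le_sup (Finset.left_mem_Icc.mpr hn)

lemma exists_envelope_eq {h n : ℕ} (W : ℕ → NNReal) (hn : n ≤ h) :
    ∃ i, n ≤ i ∧ i ≤ h ∧ envelope h W n = W i := by
  obtain ⟨i, hi, heq⟩ := Finset.exists_mem_eq_sup _ (Finset.nonempty_Icc.mpr hn) W
  exact ⟨i, (Finset.mem_Icc.mp hi).1, (Finset.mem_Icc.mp hi).2, heq⟩

lemma envelope_mul_add_envelope_mul_le {h : ℕ} {W : ℕ → NNReal} {K : NNReal}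
    (hW : ∀ n ∈ Finset.Icc 1 h, ∀ m ∈ Finset.Icc 1 h, W n * m + W m * n ≤ K) :
    ∀ n ∈ Finset.Icc 1 h, ∀ m ∈ Finset.Icc 1 h, envelope h W n * m + envelope h W m * n ≤ K := by
  intro n hn m hm
  rw [Finset.mem_Icc] at hn hm
  obtain ⟨i, hni, hih, hi⟩ := exists_envelope_eq W hn.2
  obtain ⟨j, hmj, hjh, hj⟩ := exists_envelope_eq W hm.2
  rw [hi, hj]
  refine le_trans ?_ (hW i (Finset.mem_Icc.mpr ⟨by omega, hih⟩) j
    (Finset.mem_Icc.mpr ⟨by omega, hjh⟩))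
  gcongr

/-- The sum of the sieve slopes deviates from its mean by a bounded amount, so Abel summation
replaces each slope by the mean. -/
lemma sum_sieveSlope_mul_le {V : ℕ → ℝ} (hV : Antitone V) (hV0 : ∀ n, 0 ≤ V n) (h : ℕ) :
    ∑ i ∈ Finset.range h, sieveSlope 210 (i + 1) * V (i + 1) ≤
      27648 / 210 * ∑ i ∈ Finset.range h, V (i + 1) + 20436 / 210 * V 1 := by
  have habel := sum_mul_le_of_antitone (u := fun i => (sieveSlope 210 (i + 1) : ℝ) - 27648 / 210)
    (V := fun i => V (i + 1)) (C := 20436 / 210) (fun i j hij => hV (Nat.succ_le_succ hij))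
    (fun i => hV0 _) (fun x => by
      have : 210 * ∑ i ∈ Finset.range x, (sieveSlope 210 (i + 1) : ℝ) ≤ 27648 * x + 20436 := by
        exact_mod_cast sum_sieveSlope_le x
      rw [Finset.sum_sub_distrib, Finset.sum_const, Finset.card_range, nsmul_eq_mul]
      linarith) h
  simp only [sub_mul, Finset.sum_sub_distrib, ← Finset.mul_sum, zero_add] at habel
  linarith

lemma sum_sieve_lt {h k : ℕ} (hh : 181 ≤ h) (hk : 3 * h ^ 2 ≤ 4 * k) {V : ℕ → ℝ}
    (hV : Antitone V) (hV0 : ∀ n, 0 ≤ V n)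
    (hcoupled : ∀ n ∈ Finset.Icc 1 h, ∀ m ∈ Finset.Icc 1 h, V n * m + V m * n ≤ 2 * k) :
    ∑ i ∈ Finset.range h, (sieveSlope 210 (i + 1) * V (i + 1) + sieveError 210 (i + 1)) <
      210 * (k + 6) := by
  have hslope := sum_sieveSlope_mul_le hV hV0 h
  have herror : 35 * ∑ i ∈ Finset.range h, (sieveError 210 (i + 1) : ℝ) ≤ 9892 * h := by
    exact_mod_cast sum_sieveError_le h
  have harea : ∑ i ∈ Finset.range h, V (i + 1) ≤ Real.pi / 2 * k :=
    sum_range_le_of_antitone hV hV0 (by omega) hcoupled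
  have hpi : Real.pi / 2 * k ≤ 1.5708 * k := by
    gcongr
    linarith [Real.pi_lt_d4]
  have hh' : (181 : ℝ) ≤ h := by exact_mod_cast hh
  have hV1 : V 1 * 181 ≤ 2 * k := by
    have := hcoupled 1 (by simp; omega) h (by simp; omega)
    have := mul_le_mul_of_nonneg_left hh' (hV0 1)
    push_cast at *
    linarith [hV0 h]
  have hh_le : (543 * h : ℝ) ≤ 4 * k := by
    have : (3 * h ^ 2 : ℝ) ≤ 4 * k := by exact_mod_cast hk
    nlinarith
  rw [Finset.sum_add_distrib]
  linarith

lemma totalCount_add_one {h : ℕ} (hh : 0 < h) (f g : ℕ → ℤ) :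
    totalCount h f g + 1 = ∑ n ∈ Finset.Icc 1 h,
      (signedCoprimeCount n (f n) + signedCoprimeCount n (g n) + if n = 1 then 1 else 0) := by
  rw [Finset.sum_add_distrib, Finset.sum_ite_eq',
    if_pos (Finset.left_mem_Icc.mpr (Nat.succ_le_of_lt hh)), totalCount]

lemma totalCount_le_of_181_le {h k : ℕ} (hh : 181 ≤ h) (hk : 3 * h ^ 2 ≤ 4 * k) {f g : ℕ → ℤ}
    {W : ℕ → ℝ} (hW0 : ∀ n, 0 ≤ W n)
    (hW : ∀ n ∈ Finset.Icc 1 h, ∀ m ∈ Finset.Icc 1 h, W n * m + W m * n ≤ 2 * k)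
    (hfg : ∀ n ∈ Finset.Icc 1 h, -1 ≤ f n + g n)
    (hfgW : ∀ n ∈ Finset.Icc 1 h, f n + g n ≤ W n) :
    totalCount h f g ≤ k + 4 := by
  lift W to ℕ → NNReal using hW0
  have hrow : ∀ n ∈ Finset.Icc 1 h,
      (210 * (signedCoprimeCount n (f n) + signedCoprimeCount n (g n) +
        if n = 1 then 1 else 0 : ℤ) : ℝ) ≤
      sieveSlope 210 n * envelope h W n + sieveError 210 n := by
    intro n hn
    have hsieve : (210 * (signedCoprimeCount n (f n) + signedCoprimeCount n (g n) +
        if n = 1 then 1 else 0 : ℤ) : ℝ) ≤ sieveSlope 210 n * (f n + g n) + sieveError 210 n := by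
      exact_mod_cast mul_signedCoprimeCount_add_le (by norm_num) (Finset.mem_Icc.mp hn).1 (hfg n hn)
    have henvelope : (W n : ℝ) ≤ envelope h W n := le_envelope W (Finset.mem_Icc.mp hn).2
    refine hsieve.trans ?_
    gcongr
    exact (hfgW n hn).trans henvelope
  have hlt := sum_sieve_lt hh hk (V := fun n => envelope h W n)
    (fun n m hnm => antitone_envelope h W hnm) (fun n => NNReal.coe_nonneg _)
    (by exact_mod_cast envelope_mul_add_envelope_mul_le (by exact_mod_cast hW))
  have hsum : (210 * (totalCount h f g + 1 : ℤ) : ℝ) < 210 * (k + 6) := by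
    rw [totalCount_add_one (by omega), Int.cast_sum, Finset.mul_sum]
    refine (Finset.sum_le_sum hrow).trans_lt (hlt.trans_eq' ?_)
    rw [Finset.range_eq_Ico, Finset.sum_Ico_add' (fun n => (sieveSlope 210 n * envelope h W n +
      sieveError 210 n : ℝ)) 0 h 1]
    rfl
  have : totalCount h f g + 1 < k + 6 := by
    have := lt_of_mul_lt_mul_left hsum (by norm_num)
    exact_mod_cast this
  omega

/-! ### Nice sets -/

lemma eq_or_eq_neg_of_mul_eq_mul {p q : ℤ × ℤ} (hp : Int.gcd p.1 p.2 = 1)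
    (hq : Int.gcd q.1 q.2 = 1) (h : p.1 * q.2 = q.1 * p.2) : q = p ∨ q = -p := by
  obtain ⟨u, v, huv⟩ := Int.isCoprime_iff_gcd_eq_one.mpr hp
  have hfst : q.1 = (u * q.1 + v * q.2) * p.1 := by linear_combination -q.1 * huv - v * h
  have hsnd : q.2 = (u * q.1 + v * q.2) * p.2 := by linear_combination -q.2 * huv + u * h
  generalize u * q.1 + v * q.2 = c at hfst hsnd
  rw [hfst, hsnd, Int.gcd_mul_left, hp, mul_one] at hq
  rcases Int.natAbs_eq_iff.mp hq with rfl | rfl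
  · exact Or.inl (Prod.ext (by simpa using hfst) (by simpa using hsnd))
  · exact Or.inr (Prod.ext (by simpa using hfst) (by simpa using hsnd))

variable {k : ℕ} {Q : Set (ℤ × ℤ)}

lemma eq_of_mul_eq_mul (hQ : IsKNice k Q) {p q : ℤ × ℤ} (hp : p ∈ Q) (hq : q ∈ Q)
    (h : p.1 * q.2 = q.1 * p.2) : p = q := by
  rcases eq_or_eq_neg_of_mul_eq_mul (hQ.1 p hp).2 (hQ.1 q hq).2 h with h | h
  · exact h.symm
  · exact absurd (h ▸ hq) (hQ.2.1 p hp)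

/-- The point `(q.1 : q.2)` of the projective line over `ZMod p`, with `none` at infinity. -/
def slopeMod (p : ℕ) [Fact p.Prime] (q : ℤ × ℤ) : Option (ZMod p) :=
  if (q.2 : ZMod p) = 0 then none else some (q.1 / q.2)

lemma mul_eq_mul_of_slopeMod_eq {p : ℕ} [Fact p.Prime] {q r : ℤ × ℤ}
    (h : slopeMod p q = slopeMod p r) : (q.1 * r.2 : ZMod p) = r.1 * q.2 := by
  unfold slopeMod at h
  split_ifs at h with hq hr hr
  · rw [hq, hr, mul_zero, mul_zero]
  · exact (div_eq_div_iff hq hr).mp (Option.some.inj h)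

lemma injOn_slopeMod (hQ : IsKNice k Q) {p : ℕ} [Fact p.Prime] (hk : k < p) :
    Set.InjOn (slopeMod p) Q := by
  intro q hq r hr hqr
  have hdvd : (p : ℤ) ∣ q.1 * r.2 - r.1 * q.2 := by
    rw [← ZMod.intCast_zmod_eq_zero_iff_dvd]
    push_cast
    exact sub_eq_zero.mpr (mul_eq_mul_of_slopeMod_eq hqr)
  exact hQ.eq_of_mul_eq_mul hq hr (sub_eq_zero.mp (Int.eq_zero_of_abs_lt_dvd hdvd
    ((hQ.2.2 q hq r hr).trans_lt (by exact_mod_cast hk))))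

lemma finite (hQ : IsKNice k Q) : Q.Finite := by
  obtain ⟨p, hkp, hp⟩ := Nat.exists_infinite_primes (k + 1)
  have : Fact p.Prime := ⟨hp⟩
  exact Set.Finite.of_finite_image (Set.toFinite _) (hQ.injOn_slopeMod hkp)

lemma ncard_row_zero_le (hQ : IsKNice k Q) : {q ∈ Q | q.2 = 0}.ncard ≤ 1 := by
  rw [Set.ncard_le_one (hQ.finite.subset (Set.sep_subset _ _))]
  rintro p ⟨hp, hp0⟩ q ⟨hq, hq0⟩
  exact hQ.eq_of_mul_eq_mul hp hq (by rw [hp0, hq0, mul_zero, mul_zero])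

lemma ncard_le_one_of_heightLe_zero (hQ : IsKNice k Q) (hQ0 : HeightLe Q 0) : Q.ncard ≤ 1 := by
  have hrow : {q ∈ Q | q.2 = 0} = Q :=
    Set.sep_eq_self_iff_mem_true.mpr fun q hq => abs_nonpos_iff.mp (hQ0 q hq)
  exact hrow ▸ hQ.ncard_row_zero_le

lemma ncard_le_add_one_of_prime (hQ : IsKNice k Q) {p : ℕ} (hp : p.Prime) (hk : k < p) :
    Q.ncard ≤ p + 1 := by
  have : Fact p.Prime := ⟨hp⟩
  calc Q.ncard = (slopeMod p '' Q).ncard := (hQ.injOn_slopeMod hk).ncard_image.symm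
    _ ≤ Nat.card (Option (ZMod p)) := Set.ncard_le_card _
    _ = p + 1 := by simp

section Image

variable {f : ℤ × ℤ → ℤ × ℤ}

lemma injOn_of_abs_det_eq (hQ : IsKNice k Q)
    (hdet : ∀ p ∈ Q, ∀ q ∈ Q,
      |(f p).1 * (f q).2 - (f q).1 * (f p).2| = |p.1 * q.2 - q.1 * p.2|) :
    Set.InjOn f Q := by
  intro p hp q hq hpq
  have := hdet p hp q hq
  rw [hpq, sub_self, abs_zero, eq_comm, abs_eq_zero] at this
  exact hQ.eq_of_mul_eq_mul hp hq (sub_eq_zero.mp this)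

lemma image (hQ : IsKNice k Q) (hgcd : ∀ p ∈ Q, Int.gcd (f p).1 (f p).2 = 1)
    (hdet : ∀ p ∈ Q, ∀ q ∈ Q,
      |(f p).1 * (f q).2 - (f q).1 * (f p).2| = |p.1 * q.2 - q.1 * p.2|) :
    IsKNice k (f '' Q) := by
  have hne : ∀ p ∈ Q, f p ≠ (0, 0) := fun p hp h => by simpa [h] using hgcd p hp
  refine ⟨?_, ?_, ?_⟩
  · rintro _ ⟨p, hp, rfl⟩
    exact ⟨hne p hp, hgcd p hp⟩
  · rintro _ ⟨p, hp, rfl⟩ ⟨q, hq, hqp⟩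
    have hzero := hdet p hp q hq
    rw [hqp, Prod.fst_neg, Prod.snd_neg, mul_neg, neg_mul, sub_self, abs_zero, eq_comm,
      abs_eq_zero] at hzero
    rw [hQ.eq_of_mul_eq_mul hp hq (sub_eq_zero.mp hzero)] at hqp
    exact hne q hq (self_eq_neg.mp hqp)
  · rintro _ ⟨p, hp, rfl⟩ _ ⟨q, hq, rfl⟩
    rw [hdet p hp q hq]
    exact hQ.2.2 p hp q hq

end Image

/-- The heights bounding some `k`-nice set of `c` elements. -/
def heightBounds (k c : ℕ) : Set ℕ := {h | ∃ Q, IsKNice k Q ∧ Q.ncard = c ∧ HeightLe Q h}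

lemma heightBounds_nonempty (hQ : IsKNice k Q) : (heightBounds k Q.ncard).Nonempty := by
  obtain ⟨h, hh⟩ := (hQ.finite.image fun q => q.2.natAbs).bddAbove
  refine ⟨h, Q, hQ, rfl, fun q hq => ?_⟩
  rw [Int.abs_eq_natAbs]
  exact_mod_cast hh (Set.mem_image_of_mem _ hq)

lemma image_linear (hQ : IsKNice k Q) {a b c d : ℤ} (hunit : a * d - b * c = 1) :
    IsKNice k ((fun p => (a * p.1 + b * p.2, c * p.1 + d * p.2)) '' Q) ∧
      ((fun p => (a * p.1 + b * p.2, c * p.1 + d * p.2)) '' Q).ncard = Q.ncard := by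
  have hdet (p q : ℤ × ℤ) : |(a * p.1 + b * p.2) * (c * q.1 + d * q.2) -
      (a * q.1 + b * q.2) * (c * p.1 + d * p.2)| = |p.1 * q.2 - q.1 * p.2| :=
    congrArg _ (by linear_combination (p.1 * q.2 - q.1 * p.2) * hunit)
  refine ⟨hQ.image (fun p hp => ?_) fun p _ q _ => hdet p q,
    (hQ.injOn_of_abs_det_eq fun p _ q _ => hdet p q).ncard_image⟩
  obtain ⟨u, v, huv⟩ := Int.isCoprime_iff_gcd_eq_one.mpr (hQ.1 p hp).2
  exact Int.isCoprime_iff_gcd_eq_one.mp ⟨u * d - v * c, v * a - u * b, by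
    linear_combination huv + (u * p.1 + v * p.2) * hunit⟩

lemma exists_le_abs_linear {h : ℕ} (hh : 0 < h) (hQ : IsKNice k Q)
    (hmin : h ∈ lowerBounds (heightBounds k Q.ncard)) {c d : ℤ} (hcd : IsCoprime c d) :
    ∃ q ∈ Q, (h : ℤ) ≤ |c * q.1 + d * q.2| := by
  obtain ⟨u, v, huv⟩ := hcd
  obtain ⟨hnice, hcard⟩ := hQ.image_linear (a := v) (b := -u) (c := c) (d := d)
    (by linear_combination huv)
  by_contra! hlt
  have hle : h ≤ h - 1 := hmin ⟨_, hnice, hcard, by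
    rintro _ ⟨q, hq, rfl⟩
    have := hlt q hq
    simp only
    omega⟩
  omega

lemma exists_yNonneg {h : ℕ} (hQ : IsKNice k Q) (hQh : HeightLe Q h) :
    ∃ Q', IsKNice k Q' ∧ Q'.ncard = Q.ncard ∧ YNonneg Q' ∧ HeightLe Q' h := by
  set f : ℤ × ℤ → ℤ × ℤ := fun q => if q.2 < 0 then -q else q
  have hf (q : ℤ × ℤ) : f q = q ∨ f q = -q := by
    simp only [f]
    split_ifs <;> simp
  have hdet (p q : ℤ × ℤ) : |(f p).1 * (f q).2 - (f q).1 * (f p).2| =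
      |p.1 * q.2 - q.1 * p.2| := by
    rcases hf p with hp | hp <;> rcases hf q with hq | hq <;>
      simp [hp, hq, abs_sub_comm, ← sub_eq_neg_add]
  refine ⟨f '' Q, hQ.image (fun p hp => ?_) fun p _ q _ => hdet p q,
    (hQ.injOn_of_abs_det_eq fun p _ q _ => hdet p q).ncard_image, ?_, ?_⟩
  · rcases hf p with h | h <;> simpa [h] using (hQ.1 p hp).2
  · rintro _ ⟨q, -, rfl⟩
    simp only [f]
    split_ifs with hq
    · simpa using hq.le
    · exact not_lt.mp hq
  · rintro _ ⟨q, hq, rfl⟩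
    rcases hf q with h | h <;> simpa [h] using hQh q hq

lemma exists_mem_fst_mem_Icc {h : ℕ} (hh : 0 < h) (hQ : IsKNice k Q) (hy : YNonneg Q)
    (hQh : HeightLe Q h) (hmin : h ∈ lowerBounds (heightBounds k Q.ncard)) :
    ∃ Q', IsKNice k Q' ∧ Q'.ncard = Q.ncard ∧ YNonneg Q' ∧ HeightLe Q' h ∧
      ∃ x ∈ Set.Icc (0 : ℤ) h, (x, (h : ℤ)) ∈ Q' := by
  obtain ⟨v, hv, hvh⟩ := hQ.exists_le_abs_linear hh hmin (c := 0) (d := 1) isCoprime_one_right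
  have hv2 : v.2 = h := by
    have := hQh v hv
    have := hy v hv
    rw [zero_mul, one_mul, zero_add] at hvh
    rw [abs_of_nonneg this] at *
    omega
  obtain ⟨hnice, hcard⟩ := hQ.image_linear (a := 1) (b := -(v.1 / h)) (c := 0) (d := 1) (by ring)
  have hh' : (0 : ℤ) < h := by exact_mod_cast hh
  refine ⟨_, hnice, hcard, ?_, ?_, v.1 % h,
    ⟨Int.emod_nonneg _ hh'.ne', (Int.emod_lt_of_pos _ hh').le⟩, v, hv, ?_⟩
  · rintro _ ⟨q, hq, rfl⟩
    simpa using hy q hq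
  · rintro _ ⟨q, hq, rfl⟩
    simpa using hQh q hq
  · ext
    · simp only [hv2]
      linarith [Int.emod_add_mul_ediv v.1 h]
    · simpa using hv2

lemma three_mul_sq_le_of_add_le {a b c k : ℤ} (ha : 0 ≤ a) (hb : 0 ≤ b) (hab : a + b ≤ c)
    (hk : c ^ 2 - a * b ≤ k) : 3 * c ^ 2 ≤ 4 * k := by
  have hsq : (a + b) ^ 2 ≤ c ^ 2 := pow_le_pow_left₀ (add_nonneg ha hb) hab 2
  linarith [four_mul_le_sq_add a b]

lemma three_mul_sq_le {h : ℕ} (hh : 0 < h) (hQ : IsKNice k Q) (hy : YNonneg Q)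
    (hQh : HeightLe Q h) (hmin : h ∈ lowerBounds (heightBounds k Q.ncard)) {x : ℤ}
    (hx : x ∈ Set.Icc (0 : ℤ) h) (hxQ : (x, (h : ℤ)) ∈ Q) : 3 * h ^ 2 ≤ 4 * k := by
  obtain ⟨q, hq, hq1⟩ := hQ.exists_le_abs_linear hh hmin (c := 1) (d := 0) isCoprime_one_left
  obtain ⟨r, hr, hr1⟩ := hQ.exists_le_abs_linear hh hmin (c := 1) (d := -1) isCoprime_one_left
  have hheight (p : ℤ × ℤ) (hp : p ∈ Q) : p.2 ∈ Set.Icc (0 : ℤ) h :=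
    ⟨hy p hp, (le_abs_self _).trans (hQh p hp)⟩
  obtain ⟨hx0, hxh⟩ := hx
  obtain ⟨hq0, hqh⟩ := hheight q hq
  obtain ⟨hr0, hrh⟩ := hheight r hr
  have hqx := abs_le.mp (hQ.2.2 q hq _ hxQ)
  have hxr := abs_le.mp (hQ.2.2 _ hxQ r hr)
  have hqr := abs_le.mp (hQ.2.2 q hq r hr)
  zify
  rcases le_abs'.mp hq1 with hq1 | hq1
  · refine three_mul_sq_le_of_add_le le_rfl le_rfl (by simp) ?_
    nlinarith [mul_nonneg hx0 hq0]
  rcases le_abs.mp hr1 with hr1 | hr1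
  · refine three_mul_sq_le_of_add_le le_rfl le_rfl (by simp) ?_
    nlinarith [mul_nonneg (sub_nonneg.mpr hxh) hr0]
  have hsum : x + q.2 ≤ h ∨ (h - x) + r.2 ≤ h ∨ (h - q.2) + (h - r.2) ≤ h := by omega
  rcases hsum with hsum | hsum | hsum
  · refine three_mul_sq_le_of_add_le hx0 hq0 hsum ?_
    nlinarith
  · refine three_mul_sq_le_of_add_le (sub_nonneg.mpr hxh) hr0 hsum ?_
    nlinarith
  · refine three_mul_sq_le_of_add_le (sub_nonneg.mpr hqh) (sub_nonneg.mpr hrh) hsum ?_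
    nlinarith

/-! ### Rows -/

/-- The abscissae at height `n` of the segments from the origin to the elements of `Q`. -/
def slice (Q : Set (ℤ × ℤ)) (n : ℕ) : Set ℝ :=
  (fun q => (n * q.1 / q.2 : ℝ)) '' {q ∈ Q | (n : ℤ) ≤ q.2}

lemma finite_slice (hQ : IsKNice k Q) (n : ℕ) : (slice Q n).Finite :=
  (hQ.finite.subset (Set.sep_subset _ _)).image _

lemma slice_nonempty {v : ℤ × ℤ} (hv : v ∈ Q) {n : ℕ} (hn : (n : ℤ) ≤ v.2) :
    (slice Q n).Nonempty :=
  Set.Nonempty.image _ ⟨v, hv, hn⟩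

lemma fst_mem_slice {q : ℤ × ℤ} (hq : q ∈ Q) {n : ℕ} (hn : 0 < n) (hqn : q.2 = n) :
    (q.1 : ℝ) ∈ slice Q n := by
  refine ⟨q, ⟨hq, hqn.ge⟩, ?_⟩
  beta_reduce
  rw [hqn, Int.cast_natCast, mul_div_cancel_left₀ _ (by positivity)]

lemma mul_sub_mul_le (hQ : IsKNice k Q) {n m : ℕ} (hn : 0 < n) (hm : 0 < m) {u w : ℝ}
    (hu : u ∈ slice Q n) (hw : w ∈ slice Q m) : u * m - w * n ≤ k := by
  obtain ⟨q, ⟨hq, hnq⟩, rfl⟩ := hu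
  obtain ⟨r, ⟨hr, hmr⟩, rfl⟩ := hw
  have hnq' : (n : ℝ) ≤ q.2 := by exact_mod_cast hnq
  have hmr' : (m : ℝ) ≤ r.2 := by exact_mod_cast hmr
  have hq0 : (0 : ℝ) < q.2 := lt_of_lt_of_le (by positivity) hnq'
  have hr0 : (0 : ℝ) < r.2 := lt_of_lt_of_le (by positivity) hmr'
  have hdet : |(q.1 * r.2 - r.1 * q.2 : ℝ)| ≤ k := by exact_mod_cast hQ.2.2 q hq r hr
  calc (n * q.1 / q.2 * m - m * r.1 / r.2 * n : ℝ)
      = n / q.2 * (m / r.2) * (q.1 * r.2 - r.1 * q.2) := by field_simp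
    _ ≤ n / q.2 * (m / r.2) * k := by gcongr; exact le_of_abs_le hdet
    _ ≤ 1 * 1 * k := by gcongr <;> exact div_le_one_of_le₀ ‹_› (by positivity)
    _ = k := by ring

lemma sSup_add_neg_sInf_nonneg (hQ : IsKNice k Q) (n : ℕ) :
    0 ≤ sSup (slice Q n) + -sInf (slice Q n) := by
  rw [← sub_eq_add_neg, sub_nonneg]
  exact Real.sInf_le_sSup _ (hQ.finite_slice n).bddBelow (hQ.finite_slice n).bddAbove

lemma sSup_mul_sub_sInf_mul_le (hQ : IsKNice k Q) {v : ℤ × ℤ} (hv : v ∈ Q) {n m : ℕ}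
    (hn : n ∈ Finset.Icc 1 v.2.toNat) (hm : m ∈ Finset.Icc 1 v.2.toNat) :
    sSup (slice Q n) * m - sInf (slice Q m) * n ≤ k := by
  rw [Finset.mem_Icc] at hn hm
  exact hQ.mul_sub_mul_le hn.1 hm.1
    ((slice_nonempty hv (by omega)).csSup_mem (hQ.finite_slice n))
    ((slice_nonempty hv (by omega)).csInf_mem (hQ.finite_slice m))

lemma ncard_eq_add_sum_ncard_row (hQ : Q.Finite) {h : ℕ} (hy : YNonneg Q) (hQh : HeightLe Q h) :
    Q.ncard = {q ∈ Q | q.2 = 0}.ncard + ∑ n ∈ Finset.Icc 1 h, {q ∈ Q | q.2 = (n : ℤ)}.ncard := by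
  lift Q to Finset (ℤ × ℤ) using hQ
  have hmaps : Set.MapsTo (fun q : ℤ × ℤ => q.2) Q
      ((insert 0 (Finset.Icc 1 h)).image ((↑) : ℕ → ℤ)) := by
    intro q hq
    have hq0 := hy q hq
    have hqh := (le_abs_self _).trans (hQh q hq)
    simp only [Finset.coe_image, Set.mem_image, SetLike.mem_coe, Finset.mem_insert, Finset.mem_Icc]
    exact ⟨q.2.toNat, by omega, by omega⟩
  have hrow (m : ℤ) :
      {q ∈ (Q : Set (ℤ × ℤ)) | q.2 = m}.ncard = (Q.filter fun q => q.2 = m).card := by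
    rw [← Set.ncard_coe_finset, Finset.coe_filter]
    rfl
  simp only [hrow]
  rw [Set.ncard_coe_finset, Finset.card_eq_sum_card_fiberwise hmaps,
    Finset.sum_image (by simp), Finset.sum_insert (by simp), Nat.cast_zero]

lemma ncard_row_le (hQ : IsKNice k Q) {n : ℕ} {a b : ℤ}
    (hrow : ∀ q ∈ Q, q.2 = n → -b ≤ q.1 ∧ q.1 ≤ a) :
    {q ∈ Q | q.2 = (n : ℤ)}.ncard ≤
      ((Finset.Icc (-b) a).filter fun m => Int.gcd m n = 1).card := by
  rw [← Set.ncard_coe_finset]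
  refine Set.ncard_le_ncard_of_injOn Prod.fst (fun q hq => ?_)
    (fun p hp q hq hpq => Prod.ext hpq (hp.2.trans hq.2.symm)) (Finset.finite_toSet _)
  rw [SetLike.mem_coe, Finset.mem_filter, Finset.mem_Icc]
  exact ⟨hrow q hq.1 hq.2, hq.2 ▸ (hQ.1 q hq.1).2⟩

lemma ncard_le_totalCount_add_two {h : ℕ} (hh : 0 < h) (hQ : IsKNice k Q) (hy : YNonneg Q)
    (hQh : HeightLe Q h) {f g : ℕ → ℤ} (hfg : ∀ n ∈ Finset.Icc 1 h, -1 ≤ f n + g n)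
    (hrow : ∀ n ∈ Finset.Icc 1 h, ∀ q ∈ Q, q.2 = n → -g n ≤ q.1 ∧ q.1 ≤ f n) :
    (Q.ncard : ℤ) ≤ totalCount h f g + 2 := by
  have hzero : {q ∈ Q | q.2 = 0}.ncard ≤ 1 := hQ.ncard_row_zero_le
  have hpos : (∑ n ∈ Finset.Icc 1 h, {q ∈ Q | q.2 = (n : ℤ)}.ncard : ℤ) ≤ totalCount h f g + 1 := by
    rw [totalCount_add_one hh]
    refine Finset.sum_le_sum fun n hn => ?_
    rw [← card_filter_coprime_Icc (Finset.mem_Icc.mp hn).1 (hfg n hn)]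
    exact_mod_cast hQ.ncard_row_le (hrow n hn)
  rw [ncard_eq_add_sum_ncard_row hQ.finite hy hQh]
  push_cast
  linarith [(Nat.cast_le (α := ℤ)).mpr hzero]

lemma neg_one_le_floor_add_floor {a b : ℝ} (hab : 0 ≤ a + b) : -1 ≤ ⌊a⌋ + ⌊b⌋ := by
  have : (-2 : ℝ) < ⌊a⌋ + ⌊b⌋ := by linarith [Int.lt_floor_add_one a, Int.lt_floor_add_one b]
  exact Int.lt_iff_add_one_le.mp (by exact_mod_cast this)

lemma isCoupled_floor {h : ℕ} {α β : ℕ → ℝ}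
    (hαβ : ∀ n ∈ Finset.Icc 1 h, ∀ m ∈ Finset.Icc 1 h, α n * m + β m * n ≤ k) :
    IsCoupled k h (fun n => ⌊α n⌋) fun n => ⌊β n⌋ := by
  intro n hn m hm
  have : (⌊α n⌋ * m + ⌊β m⌋ * n : ℝ) ≤ k := by
    refine le_trans ?_ (hαβ n hn m hm)
    gcongr <;> exact Int.floor_le _
  exact_mod_cast this

lemma ncard_le_totalCount_floor_add_two {h : ℕ} (hh : 0 < h) (hQ : IsKNice k Q)
    (hy : YNonneg Q) (hQh : HeightLe Q h) :
    (Q.ncard : ℤ) ≤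
      totalCount h (fun n => ⌊sSup (slice Q n)⌋) (fun n => ⌊-sInf (slice Q n)⌋) + 2 := by
  refine hQ.ncard_le_totalCount_add_two hh hy hQh
    (fun n _ => neg_one_le_floor_add_floor (hQ.sSup_add_neg_sInf_nonneg n))
    fun n hn q hq hqn => ?_
  have hmem := fst_mem_slice hq (Finset.mem_Icc.mp hn).1 hqn
  have hle := csInf_le (hQ.finite_slice n).bddBelow hmem
  refine ⟨neg_le.mp (Int.le_floor.mpr ?_),
    Int.le_floor.mpr (le_csSup (hQ.finite_slice n).bddAbove hmem)⟩
  rw [Int.cast_neg]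
  exact neg_le_neg hle

lemma ncard_le_add_six_of_mem {h : ℕ} (hh : 0 < h) (hQ : IsKNice k Q) (hy : YNonneg Q)
    (hQh : HeightLe Q h) (hk : 3 * h ^ 2 ≤ 4 * k) (hprime : ∀ p, p.Prime → k < p → k + 5 < p)
    {x : ℤ} (hx : (x, (h : ℤ)) ∈ Q) : Q.ncard ≤ k + 6 := by
  have hends (n) (hn : n ∈ Finset.Icc 1 h) (m) (hm : m ∈ Finset.Icc 1 h) :
      sSup (slice Q n) * m + -sInf (slice Q m) * n ≤ k := by
    rw [neg_mul, ← sub_eq_add_neg]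
    exact hQ.sSup_mul_sub_sInf_mul_le hx hn hm
  have hcard := hQ.ncard_le_totalCount_floor_add_two hh hy hQh
  suffices totalCount h (fun n => ⌊sSup (slice Q n)⌋) (fun n => ⌊-sInf (slice Q n)⌋) ≤ k + 4 by
    omega
  rcases le_or_gt h 180 with h180 | h180
  · exact totalCountLE_of_le_180 hh h180 hk hprime _ _ (isCoupled_floor hends)
  · exact totalCount_le_of_181_le h180 hk hQ.sSup_add_neg_sInf_nonneg
      (fun n hn m hm => by linarith [hends n hn m hm, hends m hm n hn])
      (fun n _ => neg_one_le_floor_add_floor (hQ.sSup_add_neg_sInf_nonneg n))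
      fun n _ => add_le_add (Int.floor_le _) (Int.floor_le _)

end IsKNice

theorem kNice_card_le_add_six (k : ℕ) (hk : 1 ≤ k) (Q : Set (ℤ × ℤ))
    (hQ : IsKNice k Q) : Q.Finite ∧ Q.ncard ≤ k + 6 := by
  refine ⟨hQ.finite, ?_⟩
  by_cases hprime : ∀ p, p.Prime → k < p → k + 5 < p
  · obtain ⟨h, ⟨Q₁, hQ₁, hcard₁, hheight₁⟩, hmin⟩ :
        ∃ h, IsLeast (IsKNice.heightBounds k Q.ncard) h :=
      ⟨_, Nat.sInf_mem hQ.heightBounds_nonempty, fun _ => Nat.sInf_le⟩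
    rw [← hcard₁] at hmin ⊢
    rcases h.eq_zero_or_pos with rfl | hh
    · exact (hQ₁.ncard_le_one_of_heightLe_zero hheight₁).trans (by omega)
    obtain ⟨Q₂, hQ₂, hcard₂, hy₂, hheight₂⟩ := hQ₁.exists_yNonneg hheight₁
    rw [← hcard₂] at hmin ⊢
    obtain ⟨Q₃, hQ₃, hcard₃, hy₃, hheight₃, x, hx, hxQ₃⟩ :=
      hQ₂.exists_mem_fst_mem_Icc hh hy₂ hheight₂ hmin
    rw [← hcard₃] at hmin ⊢
    have hk₃ := hQ₃.three_mul_sq_le hh hy₃ hheight₃ hmin hx hxQ₃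
    exact hQ₃.ncard_le_add_six_of_mem hh hy₃ hheight₃ hk₃ hprime hxQ₃
  · push Not at hprime
    obtain ⟨p, hp, hkp, hpk⟩ := hprime
    exact (hQ.ncard_le_add_one_of_prime hp hkp).trans (by omega)
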